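/- For every integer n ≥ 1, the Schur coefficient [s_{(2^n)}] X_{GN_{n,n}} equals n! if n is even and equals 0 if n is odd, where (2^n) denotes the partition with n parts all equal to 2. -/

import Mathlib

open scoped Classical

/-! ### Cells and Young diagrams -/

/-- A cell of a Young diagram: `(row, column)`, both 0-indexed, rows from the top. -/
abbrev Cell : Type := ℕ × ℕ

/-- The length of row `i` (0-indexed from the top) of the Young diagram of the
partition `lam`, whose parts are arranged in weakly decreasing order. -/
def rowLen {N : ℕ} (lam : Nat.Partition N) (i : ℕ) : ℕ :=
  ((lam.parts.sort (· ≤ ·)).reverse).getD i 0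

/-- The Young diagram of a partition, as a set of cells. -/
def diag {N : ℕ} (lam : Nat.Partition N) : Set Cell :=
  {c : Cell | c.2 < rowLen lam c.1}

/-- The number of rows (the length) of a partition. -/
def numRows {N : ℕ} (lam : Nat.Partition N) : ℕ := Multiset.card lam.parts

/-! ### Chromatic symmetric functions and Schur functions, as monomial-coefficient
functions.  A formal power series of bounded degree in the commuting variables
`x_0, x_1, x_2, …` is recorded by the map sending an exponent vector `μ : ℕ → ℕ`
(only finitely many nonzero entries ever matter) to the coefficient of the monomial
`∏ i, x_i ^ μ i`.  Colors / tableau entries are positive integers, so the variable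
`x_0` is never used. -/

/-- A proper coloring of `G` by positive integers. -/
def IsProperColoring {V : Type*} (G : SimpleGraph V) (f : V → ℕ) : Prop :=
  (∀ v, 0 < f v) ∧ ∀ u v, G.Adj u v → f u ≠ f v

/-- The coefficient of the monomial `∏ i, x_i ^ μ i` in the chromatic symmetric
function `X_G = ∑_{proper colorings f} ∏_{v} x_{f v}`. -/
noncomputable def XCoeff {V : Type*} [Fintype V] (G : SimpleGraph V) (μ : ℕ → ℕ) : ℚ :=
  Nat.card {f : V → ℕ //
    IsProperColoring G f ∧ ∀ i, Nat.card {v : V // f v = i} = μ i}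

/-- A semistandard Young tableau of shape `lam`: positive entries on the diagram
(normalized to `0` off the diagram), weakly increasing along rows, strictly
increasing down columns. -/
def IsSSYT {N : ℕ} (lam : Nat.Partition N) (t : Cell → ℕ) : Prop :=
  (∀ c, c ∉ diag lam → t c = 0) ∧ (∀ c ∈ diag lam, 0 < t c) ∧
  (∀ i j : ℕ, ((i, j + 1) : Cell) ∈ diag lam → t (i, j) ≤ t (i, j + 1)) ∧
  (∀ i j : ℕ, ((i + 1, j) : Cell) ∈ diag lam → t (i, j) < t (i + 1, j))

/-- The coefficient of the monomial `∏ i, x_i ^ μ i` in the Schur function `s_lam`,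
i.e. the number of SSYT of shape `lam` and weight `μ`. -/
noncomputable def schurFn {N : ℕ} (lam : Nat.Partition N) (μ : ℕ → ℕ) : ℚ :=
  Nat.card {t : Cell → ℕ // IsSSYT lam t ∧
    ∀ i, Nat.card {c : Cell // c ∈ diag lam ∧ t c = i} = μ i}

/-- The coefficient `[s_lam] f` of the Schur function `s_lam` in the (unique, when it
exists) expansion `f = ∑_{ν ⊢ N} c_ν s_ν` of a symmetric function `f`, homogeneous of
degree `N`, given by its monomial coefficients. -/
noncomputable def sCoeff {N : ℕ} (f : (ℕ → ℕ) → ℚ) (lam : Nat.Partition N) : ℚ :=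
  if h : ∃ c : Nat.Partition N →₀ ℚ, ∀ μ, f μ = c.sum fun ν a => a * schurFn ν μ
  then h.choose lam else 0

/-! ### Graphs: generalized nets, generalized spiders, disjoint unions -/

/-- The generalized net `GN_{n,m}`: the complete graph on the body `Fin n`, with a
pendant (`Sum.inr j`) attached to the anchor `Sum.inl j` for each `j : Fin m`. -/
def genNet (n m : ℕ) : SimpleGraph (Fin n ⊕ Fin m) :=
  SimpleGraph.fromRel fun a b =>
    match a, b with
    | Sum.inl _, Sum.inl _ => True
    | Sum.inl i, Sum.inr j => (i : ℕ) = (j : ℕ)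
    | Sum.inr _, _ => False

/-- The generalized spider `GS_{n,(2,1^{m-1})}`: the complete graph on the body
`Fin n`, a pendant `Sum.inr (Sum.inl j)` attached to the body vertex `Sum.inl j` for
each `j : Fin m`, and one extra vertex `Sum.inr (Sum.inr 0)` (the special pendant)
attached to the pendant `Sum.inr (Sum.inl 0)`, so that the body vertex `0` (the
special anchor) carries an attached path on two vertices. -/
def genSpider2 (n m : ℕ) : SimpleGraph (Fin n ⊕ (Fin m ⊕ Fin 1)) :=
  SimpleGraph.fromRel fun a b =>
    match a, b with
    | Sum.inl _, Sum.inl _ => True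
    | Sum.inl i, Sum.inr (Sum.inl j) => (i : ℕ) = (j : ℕ)
    | Sum.inr (Sum.inl j), Sum.inr (Sum.inr _) => (j : ℕ) = 0
    | _, _ => False

/-- Disjoint union of two simple graphs. -/
def disjUnion {α β : Type*} (G : SimpleGraph α) (H : SimpleGraph β) :
    SimpleGraph (α ⊕ β) :=
  SimpleGraph.fromRel fun a b =>
    match a, b with
    | Sum.inl a, Sum.inl b => G.Adj a b
    | Sum.inr a, Sum.inr b => H.Adj a b
    | _, _ => False

/-- The one-vertex graph `K_1`. -/
def K1 : SimpleGraph (Fin 1) := ⊥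

/-- The path (= complete graph) on two vertices `P_2`. -/
def P2 : SimpleGraph (Fin 2) := ⊤

/-! ### Operations on partitions -/

/-- `removeOnes lam t` is the partition `lam ∖ 1^t` obtained by deleting `t` parts
equal to `1` from `lam` (junk value if `lam` has fewer than `t` parts equal to `1`). -/
def removeOnes {N : ℕ} (lam : Nat.Partition N) (t : ℕ) : Nat.Partition (N - t) :=
  if h : Multiset.replicate t 1 ≤ lam.parts then
    { parts := lam.parts - Multiset.replicate t 1
      parts_pos := fun hx =>
        lam.parts_pos (Multiset.mem_of_le (tsub_le_self) hx)
      parts_sum := by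
        have h1 : (lam.parts - Multiset.replicate t 1) + Multiset.replicate t 1
            = lam.parts := tsub_add_cancel_of_le h
        have h2 := congrArg Multiset.sum h1
        rw [Multiset.sum_add, Multiset.sum_replicate, lam.parts_sum] at h2
        simp only [smul_eq_mul, mul_one] at h2
        omega }
  else Nat.Partition.indiscrete (N - t)

/-- The partition `(2^a, 1^b)` of `2*a + b`. -/
def twoOne (a b : ℕ) : Nat.Partition (2 * a + b) where
  parts := Multiset.replicate a 2 + Multiset.replicate b 1
  parts_pos := by
    intro i hi
    rw [Multiset.mem_add] at hi
    rcases hi with hi | hi <;> · rw [Multiset.eq_of_mem_replicate hi]; omega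
  parts_sum := by
    rw [Multiset.sum_add, Multiset.sum_replicate, Multiset.sum_replicate]
    simp only [smul_eq_mul, mul_one]
    omega

/-! ### Special rim hook `G`-tabloids -/

/-- Two cells are adjacent if they share an edge. -/
def cellAdj (c d : Cell) : Prop :=
  (c.1 = d.1 ∧ (c.2 + 1 = d.2 ∨ d.2 + 1 = c.2)) ∨
  (c.2 = d.2 ∧ (c.1 + 1 = d.1 ∨ d.1 + 1 = c.1))

/-- A set of cells is (the diagram of) a Young diagram if it is closed under
decreasing either coordinate. -/
def IsYoungDiag (D : Set Cell) : Prop :=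
  ∀ i j i' j' : ℕ, ((i, j) : Cell) ∈ D → i' ≤ i → j' ≤ j → ((i', j') : Cell) ∈ D

/-- A set of cells is connected (via edge-adjacency, within the set). -/
def CellConnected (S : Set Cell) : Prop :=
  ∀ c ∈ S, ∀ d ∈ S, Relation.ReflTransGen (fun a b => a ∈ S ∧ b ∈ S ∧ cellAdj a b) c d

/-- A border strip (= rim hook, as a set of cells): nonempty, connected, and
containing no 2×2 square of cells. -/
def IsBorderStrip (H : Set Cell) : Prop :=
  H.Nonempty ∧ CellConnected H ∧
    ∀ i j : ℕ, ¬(((i, j) : Cell) ∈ H ∧ ((i + 1, j) : Cell) ∈ H ∧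
      ((i, j + 1) : Cell) ∈ H ∧ ((i + 1, j + 1) : Cell) ∈ H)

/-- `H` is a rim hook of the Young diagram `D`: a border strip contained in `D`
whose removal leaves a Young diagram. -/
def IsRimHookOf (D H : Set Cell) : Prop :=
  H ⊆ D ∧ IsBorderStrip H ∧ IsYoungDiag (D \ H)

/-- `IsRemovalSeq L D` says that the sets of cells in the list `L` may be removed
successively from the diagram `D`, each being a rim hook of what remains, with
nothing left at the end. -/
def IsRemovalSeq : List (Set Cell) → Set Cell → Prop
  | [], D => D = ∅
  | H :: L, D => IsRimHookOf D H ∧ IsRemovalSeq L (D \ H)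

/-- A special rim hook `G`-tabloid of shape `lam`, with respect to an order `r` on
the vertices of `G`: the cells of the diagram of `lam` are filled bijectively with
the vertices of `G` (vertex `v` goes in cell `pos v`), and the diagram is tiled by
rim hooks, successively removable, each meeting the first column.  The rim hooks are
recorded by the labelling `hk`, which assigns to each vertex the topmost row in which
its rim hook meets the first column.  The vertices in each rim hook form a stable set
of `G` and, read from the rim hook's (bottom) cell in the first column — i.e. in
increasing order of the diagonal index `column − row` — they increase with respect
to `r`. -/
structure SRHGTabloid {V : Type*} (G : SimpleGraph V) (r : V → V → Prop)
    {N : ℕ} (lam : Nat.Partition N) where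
  /-- the cell occupied by each vertex -/
  pos : V → Cell
  /-- the label of the rim hook containing each vertex: the topmost row in which
  that rim hook meets the first column -/
  hk : V → ℕ
  pos_inj : Function.Injective pos
  pos_range : Set.range pos = diag lam
  hk_mem : ∀ v, ((hk v, 0) : Cell) ∈ pos '' {u | hk u = hk v}
  hk_min : ∀ v i, ((i, 0) : Cell) ∈ pos '' {u | hk u = hk v} → hk v ≤ i
  removal : ∃ L : List ℕ, L.Nodup ∧ (∀ i, i ∈ L ↔ ∃ v, hk v = i) ∧
    IsRemovalSeq (L.map fun i => pos '' {u | hk u = i}) (diag lam)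
  stable : ∀ u v, hk u = hk v → u ≠ v → ¬G.Adj u v
  increasing : ∀ u v, hk u = hk v →
    ((pos u).2 : ℤ) - ((pos u).1 : ℤ) < ((pos v).2 : ℤ) - ((pos v).1 : ℤ) → r u v

/-- The sign of a special rim hook `G`-tabloid: `(-1)` to the total number of north
steps, where a rim hook spanning `k` rows contributes `k - 1` north steps. -/
noncomputable def tabSign {V : Type*} {G : SimpleGraph V} {r : V → V → Prop}
    {N : ℕ} {lam : Nat.Partition N} (T : SRHGTabloid G r lam) : ℤ :=
  (-1) ^ ∑ i ∈ Finset.range N,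
    ({a : ℕ | ∃ v, T.hk v = i ∧ (T.pos v).1 = a}.ncard - 1)

/-- The cells of the head of a tabloid of shape `lam`: the rows of length `≥ 2`. -/
def headCells {N : ℕ} (lam : Nat.Partition N) : Set Cell :=
  {c : Cell | c ∈ diag lam ∧ 2 ≤ rowLen lam c.1}

/-- The cells of the tail of a tabloid of shape `lam`: the rows of length `1`. -/
def tailCells {N : ℕ} (lam : Nat.Partition N) : Set Cell :=
  {c : Cell | c ∈ diag lam ∧ rowLen lam c.1 = 1}

/-- Two special rim hook `G`-tabloids have the same head: the same cells of the head
are occupied by the same vertices, and the rim hook structure restricted to the head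
agrees. -/
def SameHead {V : Type*} {G : SimpleGraph V} {r : V → V → Prop} {N : ℕ}
    {lam : Nat.Partition N} (T T' : SRHGTabloid G r lam) : Prop :=
  (∀ v, T.pos v ∈ headCells lam ↔ T'.pos v ∈ headCells lam) ∧
  (∀ v, T.pos v ∈ headCells lam → T.pos v = T'.pos v) ∧
  (∀ u v, T.pos u ∈ headCells lam → T.pos v ∈ headCells lam →
    (T.hk u = T.hk v ↔ T'.hk u = T'.hk v))

/-!
Fix a Schur expansion `X = ∑ ν, c ν * s_ν` of the chromatic symmetric function of the net. The body
is a clique on `n` vertices, so no monomial of `X` has fewer than `n` variables and, by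
triangularity of the Kostka numbers, `c ν = 0` whenever `ν` has fewer than `n` rows. Looking at
monomials in `x_1, …, x_n` then leaves the shapes `ν` with exactly `n` rows. On this side
`s_ν(x_1, …, x_n) = x_1 ⋯ x_n * s_ρ(x_1, …, x_n)`, where `ρ` is `ν` without its first column; on
the other side, a coloring permutes the `n` colors on the body, after which each pendant avoids the
color of its anchor, so that `X(x_1, …, x_n) = n! * x_1 ⋯ x_n * ∏ i, (p_1 - x_i)`.

Cancel `x_1 ⋯ x_n` and set `m` of the variables to `1` and the others to `0`: for `m ≤ n`,
`∑ ν, c ν * s_ρ(1^m) = n! * (m - 1) ^ m * m ^ (n - m) = n! * ∑ k, (-1)^k * C(m, k) * m ^ (n - k)`.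
Both ends are polynomials in `m` of degree at most `n`, hence agree at `m = -1`. There `s_ρ(1^m)`
takes the value `(-1)^|ρ|` if `ρ` is a column and `0` otherwise, which isolates `ν = (2^n)` on the
left, while the right-hand side is `n!` times `∑_{k ≤ n} (-1)^(n - k)`, which is `1` or `0`
according to the parity of `n`.
-/

/-! ### Horizontal strips and Kostka numbers -/

theorem exists_forall_lt_iff {p : ℕ → Prop} (hp : ∀ i j, i ≤ j → p j → p i) (hne : ∃ i, ¬p i) :
    ∃ s, ∀ i, i < s ↔ p i :=
  ⟨Nat.find hne, fun i => (Nat.lt_find_iff hne i).trans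
    ⟨fun h => not_not.1 (h i le_rfl), fun h j hj => not_not.2 (hp j i hj h)⟩⟩

theorem degree_eq_sum_range {ρ : ℕ →₀ ℕ} {R : ℕ} (h : ∀ i, R ≤ i → ρ i = 0) :
    ρ.degree = ∑ i ∈ Finset.range R, ρ i := by
  rw [Finsupp.degree_apply]
  refine Finset.sum_subset (fun i hi => ?_) fun i _ hi => by simpa using hi
  by_contra hR
  exact Finsupp.mem_support_iff.1 hi (h i (by simpa using hR))

theorem exists_forall_ge_eq_zero (ρ : ℕ →₀ ℕ) : ∃ R, ∀ i, R ≤ i → ρ i = 0 := by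
  refine ⟨ρ.support.sup id + 1, fun i hi => ?_⟩
  by_contra hne
  have : i ≤ ρ.support.sup id := Finset.le_sup (f := id) (Finsupp.mem_support_iff.2 hne)
  lia

theorem degree_toFinsupp (L : List ℕ) : L.toFinsupp.degree = L.sum := by
  induction L using List.reverseRecOn with
  | nil => simp
  | append_singleton L a ih =>
    rw [List.toFinsupp_concat_eq_toFinsupp_add_single, map_add, ih, Finsupp.degree_single]
    simp

/-- The shapes `σ` for which `ρ / σ` is a horizontal strip, that is, `σ` and `ρ` interlace. Shapes
are recorded by their row lengths, indexed from `0`. -/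
noncomputable def horizontalStrips (ρ : ℕ →₀ ℕ) : Finset (ℕ →₀ ℕ) :=
  Finset.Icc (ρ.comapDomain Nat.succ Nat.succ_injective.injOn) ρ

theorem mem_horizontalStrips {ρ σ : ℕ →₀ ℕ} :
    σ ∈ horizontalStrips ρ ↔ ∀ i, ρ (i + 1) ≤ σ i ∧ σ i ≤ ρ i := by
  simp only [horizontalStrips, Finset.mem_Icc, Finsupp.le_def, Finsupp.comapDomain_apply]
  exact forall_and.symm

theorem le_of_mem_horizontalStrips {ρ σ : ℕ →₀ ℕ} (h : σ ∈ horizontalStrips ρ) : σ ≤ ρ :=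
  (Finset.mem_Icc.1 h).2

theorem antitone_of_mem_horizontalStrips {ρ σ : ℕ →₀ ℕ} (h : σ ∈ horizontalStrips ρ) :
    Antitone σ :=
  antitone_nat_of_succ_le fun i =>
    (mem_horizontalStrips.1 h (i + 1)).2.trans (mem_horizontalStrips.1 h i).1

theorem self_mem_horizontalStrips {ρ : ℕ →₀ ℕ} (h : Antitone ρ) : ρ ∈ horizontalStrips ρ :=
  mem_horizontalStrips.2 fun i => ⟨h (Nat.le_succ i), le_rfl⟩

theorem eq_of_le_of_degree_le {ρ σ : ℕ →₀ ℕ} (h : σ ≤ ρ) (hd : ρ.degree ≤ σ.degree) : σ = ρ := by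
  obtain ⟨τ, rfl⟩ := exists_add_of_le h
  have hτ : τ.degree = 0 := by rw [map_add] at hd; lia
  simp [(Finsupp.degree_eq_zero_iff τ).1 hτ]

/-- The Kostka number of the shape `ρ`: the number of semistandard tableaux of shape `ρ` whose
weight is the *reverse* of the list, counted by removing the horizontal strip occupied by the
largest label, whose multiplicity is the head of the list. -/
noncomputable def kostka : List ℕ → (ℕ →₀ ℕ) → ℕ
  | [], ρ => if ρ = 0 then 1 else 0
  | a :: L, ρ => ∑ σ ∈ horizontalStrips ρ with ρ.degree = σ.degree + a, kostka L σ

theorem exists_of_kostka_cons_ne_zero {a : ℕ} {L : List ℕ} {ρ : ℕ →₀ ℕ}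
    (h : kostka (a :: L) ρ ≠ 0) :
    ∃ σ ∈ horizontalStrips ρ, ρ.degree = σ.degree + a ∧ kostka L σ ≠ 0 := by
  obtain ⟨σ, hσ, hL⟩ := Finset.exists_ne_zero_of_sum_ne_zero h
  exact ⟨σ, (Finset.mem_filter.1 hσ).1, (Finset.mem_filter.1 hσ).2, hL⟩

theorem eq_zero_of_kostka_nil_ne_zero {ρ : ℕ →₀ ℕ} (h : kostka [] ρ ≠ 0) : ρ = 0 := by
  by_contra hρ
  exact h (if_neg hρ)

theorem degree_eq_sum_of_kostka_ne_zero {L : List ℕ} {ρ : ℕ →₀ ℕ} (h : kostka L ρ ≠ 0) :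
    ρ.degree = L.sum := by
  induction L generalizing ρ with
  | nil => simp [eq_zero_of_kostka_nil_ne_zero h]
  | cons a L ih =>
    obtain ⟨σ, -, hd, hL⟩ := exists_of_kostka_cons_ne_zero h
    rw [hd, ih hL, List.sum_cons, add_comm]

theorem eq_zero_of_length_le_of_kostka_ne_zero {L : List ℕ} {ρ : ℕ →₀ ℕ} (h : kostka L ρ ≠ 0)
    {i : ℕ} (hi : L.length ≤ i) : ρ i = 0 := by
  induction L generalizing ρ i with
  | nil => simp [eq_zero_of_kostka_nil_ne_zero h]
  | cons a L ih =>
    obtain ⟨σ, hσ, -, hL⟩ := exists_of_kostka_cons_ne_zero h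
    obtain ⟨j, rfl⟩ := Nat.exists_eq_add_of_le' (Nat.one_le_of_lt hi)
    have hj : σ j = 0 := ih hL (Nat.le_of_succ_le_succ hi)
    have := (mem_horizontalStrips.1 hσ j).1
    lia

/-! ### Symmetry of Kostka numbers: the Bender–Knuth involution -/

/-- The least length of row `i` of a shape `σ` between `ρ` and `τ` such that `ρ / σ` and `σ / τ` are
horizontal strips. -/
def interlaceMin (ρ τ : ℕ →₀ ℕ) (i : ℕ) : ℕ := max (ρ (i + 1)) (τ i)

/-- The greatest length of row `i` of a shape `σ` between `ρ` and `τ` such that `ρ / σ` and `σ / τ`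
are horizontal strips. -/
def interlaceMax (ρ τ : ℕ →₀ ℕ) : ℕ → ℕ
  | 0 => ρ 0
  | i + 1 => min (ρ (i + 1)) (τ i)

theorem interlaceMax_le (ρ τ : ℕ →₀ ℕ) (i : ℕ) : interlaceMax ρ τ i ≤ ρ i := by
  cases i with
  | zero => exact le_rfl
  | succ i => exact min_le_left _ _

theorem mem_horizontalStrips_and_mem_iff {ρ σ τ : ℕ →₀ ℕ} :
    σ ∈ horizontalStrips ρ ∧ τ ∈ horizontalStrips σ ↔
      ∀ i, interlaceMin ρ τ i ≤ σ i ∧ σ i ≤ interlaceMax ρ τ i := by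
  simp only [mem_horizontalStrips, interlaceMin, max_le_iff]
  refine ⟨fun ⟨hρ, hτ⟩ i => ⟨⟨(hρ i).1, (hτ i).2⟩, ?_⟩, fun h => ⟨fun i => ⟨(h i).1.1, ?_⟩,
    fun i => ⟨(h (i + 1)).2.trans (min_le_right _ _), (h i).1.2⟩⟩⟩
  · cases i with
    | zero => exact (hρ 0).2
    | succ i => exact le_min (hρ _).2 (hτ i).1
  · exact (h i).2.trans (interlaceMax_le ρ τ i)

/-- The Bender–Knuth reflection of an intermediate shape `σ` between `ρ` and `τ`: each row length is
reflected in the interval of its possible values. -/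
noncomputable def benderKnuth (ρ τ σ : ℕ →₀ ℕ) : ℕ →₀ ℕ :=
  Finsupp.onFinset ρ.support
    (fun i => if ρ i = 0 then 0 else interlaceMin ρ τ i + interlaceMax ρ τ i - σ i)
    fun _ hi => Finsupp.mem_support_iff.2 fun h => hi (if_pos h)

section BenderKnuth

variable {ρ σ τ : ℕ →₀ ℕ} (h : ∀ i, interlaceMin ρ τ i ≤ σ i ∧ σ i ≤ interlaceMax ρ τ i)
include h

theorem benderKnuth_apply (i : ℕ) :
    benderKnuth ρ τ σ i = interlaceMin ρ τ i + interlaceMax ρ τ i - σ i := by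
  have := h i
  have := interlaceMax_le ρ τ i
  simp only [benderKnuth, Finsupp.onFinset_apply]
  split_ifs <;> lia

theorem benderKnuth_interlaces (i : ℕ) :
    interlaceMin ρ τ i ≤ benderKnuth ρ τ σ i ∧ benderKnuth ρ τ σ i ≤ interlaceMax ρ τ i := by
  rw [benderKnuth_apply h]
  have := h i
  lia

theorem benderKnuth_benderKnuth : benderKnuth ρ τ (benderKnuth ρ τ σ) = σ := by
  ext i
  rw [benderKnuth_apply (benderKnuth_interlaces h), benderKnuth_apply h]
  have := h i
  lia

end BenderKnuth

theorem sum_interlaceMin_add_interlaceMax (ρ τ : ℕ →₀ ℕ) (R : ℕ) :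
    ∑ i ∈ Finset.range R, (interlaceMin ρ τ i + interlaceMax ρ τ i) + interlaceMax ρ τ R =
      ∑ i ∈ Finset.range (R + 1), ρ i + ∑ i ∈ Finset.range R, τ i := by
  induction R with
  | zero => simp [interlaceMax]
  | succ R ih =>
    rw [Finset.sum_range_succ, Finset.sum_range_succ _ (R + 1), Finset.sum_range_succ τ]
    have h : interlaceMin ρ τ R + interlaceMax ρ τ (R + 1) = ρ (R + 1) + τ R := max_add_min _ _
    lia

theorem degree_benderKnuth_add {ρ σ τ : ℕ →₀ ℕ}
    (h : ∀ i, interlaceMin ρ τ i ≤ σ i ∧ σ i ≤ interlaceMax ρ τ i) :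
    (benderKnuth ρ τ σ).degree + σ.degree = ρ.degree + τ.degree := by
  obtain ⟨R, hρ⟩ := exists_forall_ge_eq_zero ρ
  have hmax (i) (hi : R ≤ i) : interlaceMax ρ τ i = 0 :=
    Nat.eq_zero_of_le_zero ((interlaceMax_le ρ τ i).trans_eq (hρ i hi))
  have hσ (i) (hi : R ≤ i) : σ i = 0 := by have := h i; have := hmax i hi; lia
  have hτ (i) (hi : R ≤ i) : τ i = 0 := by
    have : τ i ≤ σ i := (le_max_right _ _).trans (h i).1
    have := hσ i hi
    lia
  have hσ' (i) (hi : R ≤ i) : benderKnuth ρ τ σ i = 0 := by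
    rw [benderKnuth_apply h]; have := h i; have := hmax i hi; lia
  rw [degree_eq_sum_range hσ, degree_eq_sum_range hσ', degree_eq_sum_range hτ,
    degree_eq_sum_range (R := R + 1) fun i hi => hρ i (Nat.le_of_succ_le hi),
    ← sum_interlaceMin_add_interlaceMax, hmax R le_rfl, add_zero, ← Finset.sum_add_distrib]
  refine Finset.sum_congr rfl fun i _ => ?_
  rw [benderKnuth_apply h]
  have := h i
  lia

theorem kostka_swap (a b : ℕ) (L : List ℕ) (ρ : ℕ →₀ ℕ) :
    kostka (a :: b :: L) ρ = kostka (b :: a :: L) ρ := by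
  let chains (a b : ℕ) : Finset ((_ : ℕ →₀ ℕ) × (ℕ →₀ ℕ)) :=
    {σ ∈ horizontalStrips ρ | ρ.degree = σ.degree + a}.sigma
      fun σ => {τ ∈ horizontalStrips σ | σ.degree = τ.degree + b}
  have mem_chains {a b : ℕ} {x} : x ∈ chains a b ↔
      (∀ i, interlaceMin ρ x.2 i ≤ x.1 i ∧ x.1 i ≤ interlaceMax ρ x.2 i) ∧
        ρ.degree = x.1.degree + a ∧ x.1.degree = x.2.degree + b := by
    simp only [chains, Finset.mem_sigma, Finset.mem_filter, ← mem_horizontalStrips_and_mem_iff]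
    tauto
  let reflect (x : (_ : ℕ →₀ ℕ) × (ℕ →₀ ℕ)) : (_ : ℕ →₀ ℕ) × (ℕ →₀ ℕ) :=
    ⟨benderKnuth ρ x.2 x.1, x.2⟩
  have reflect_mem (a b : ℕ) (x) (hx : x ∈ chains a b) : reflect x ∈ chains b a := by
    obtain ⟨h, ha, hb⟩ := mem_chains.1 hx
    have := degree_benderKnuth_add h
    exact mem_chains.2 ⟨benderKnuth_interlaces h, by simp only [reflect]; lia,
      by simp only [reflect]; lia⟩
  have reflect_reflect (a b : ℕ) (x) (hx : x ∈ chains a b) : reflect (reflect x) = x := by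
    simp only [reflect, benderKnuth_benderKnuth (mem_chains.1 hx).1]
  simp only [kostka]
  rw [Finset.sum_sigma', Finset.sum_sigma']
  exact Finset.sum_bij' (fun x _ => reflect x) (fun x _ => reflect x) (reflect_mem a b)
    (reflect_mem b a) (reflect_reflect a b) (reflect_reflect b a) fun _ _ => rfl

theorem kostka_perm {L L' : List ℕ} (h : L.Perm L') (ρ : ℕ →₀ ℕ) : kostka L ρ = kostka L' ρ := by
  induction h generalizing ρ with
  | nil => rfl
  | cons a _ ih => simp only [kostka, ih]
  | swap a b L => exact kostka_swap b a L ρ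
  | trans _ _ h₁ h₂ => rw [h₁, h₂]

/-! ### Triangularity of Kostka numbers -/

theorem kostka_zero_cons {ρ : ℕ →₀ ℕ} (h : Antitone ρ) (L : List ℕ) :
    kostka (0 :: L) ρ = kostka L ρ := by
  simp only [kostka, add_zero]
  refine Finset.sum_eq_single_of_mem ρ (by simp [self_mem_horizontalStrips h]) fun σ hσ hne => ?_
  obtain ⟨hσ, hd⟩ := Finset.mem_filter.1 hσ
  exact absurd (eq_of_le_of_degree_le (le_of_mem_horizontalStrips hσ) hd.le) hne

theorem exists_le_of_kostka_append_ne_zero {L L' : List ℕ} {ρ : ℕ →₀ ℕ}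
    (h : kostka (L ++ L') ρ ≠ 0) : ∃ σ ≤ ρ, kostka L' σ ≠ 0 := by
  induction L generalizing ρ with
  | nil => exact ⟨ρ, le_rfl, h⟩
  | cons a L ih =>
    obtain ⟨σ, hσ, -, hL⟩ := exists_of_kostka_cons_ne_zero h
    obtain ⟨τ, hτ, hL'⟩ := ih hL
    exact ⟨τ, hτ.trans (le_of_mem_horizontalStrips hσ), hL'⟩

theorem sum_take_le_of_kostka_ne_zero {L : List ℕ} {ρ : ℕ →₀ ℕ} (h : kostka L ρ ≠ 0) (k : ℕ) :
    (L.take k).sum ≤ ∑ i ∈ Finset.range k, ρ i := by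
  have hperm : L.Perm (L.drop k ++ L.take k) := by
    simpa using List.perm_append_comm (l₁ := L.take k) (l₂ := L.drop k)
  rw [kostka_perm hperm] at h
  obtain ⟨σ, hσρ, hσ⟩ := exists_le_of_kostka_append_ne_zero h
  calc (L.take k).sum = σ.degree := (degree_eq_sum_of_kostka_ne_zero hσ).symm
    _ = ∑ i ∈ Finset.range k, σ i := degree_eq_sum_range fun i hi =>
        eq_zero_of_length_le_of_kostka_ne_zero hσ ((List.length_take_le k L).trans hi)
    _ ≤ ∑ i ∈ Finset.range k, ρ i := Finset.sum_le_sum fun i _ => hσρ i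

theorem kostka_toFinsupp_ne_zero {L : List ℕ} (h : L.Pairwise (· ≥ ·)) :
    kostka L L.toFinsupp ≠ 0 := by
  induction L using List.reverseRecOn with
  | nil => simp [kostka]
  | append_singleton L a ih =>
    have hL := List.pairwise_append.1 h
    rw [kostka_perm List.perm_append_comm, List.singleton_append]
    refine (Finset.sum_pos_iff.2 ⟨L.toFinsupp, Finset.mem_filter.2 ⟨?_, ?_⟩,
      Nat.pos_of_ne_zero (ih hL.1)⟩).ne'
    · refine mem_horizontalStrips.2 fun i => ?_
      rcases lt_or_ge i L.length with hi | hi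
      · have hstep := List.pairwise_iff_getElem.1 h i (i + 1) (by simp; lia) (by simpa using hi)
          (Nat.lt_succ_self i)
        rw [List.toFinsupp_apply_lt _ i hi, List.toFinsupp_apply_lt _ i (by simp; lia),
          List.toFinsupp_apply_lt _ (i + 1) (by simpa using hi)]
        rw [List.getElem_append_left hi] at hstep ⊢
        exact ⟨hstep, le_rfl⟩
      · rw [List.toFinsupp_apply_le L i hi, List.toFinsupp_apply_le _ (i + 1) (by simpa using hi)]
        simp
    · simp [degree_toFinsupp]

/-! ### Adding a column of maximal height -/

/-- The one-column shape of height `j`. -/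
noncomputable def column (j : ℕ) : ℕ →₀ ℕ := (List.replicate j 1).toFinsupp

@[simp] theorem column_apply (j i : ℕ) : column j i = if i < j then 1 else 0 := by
  rw [column, List.toFinsupp_apply]
  split_ifs with h
  · exact List.getD_replicate _ h
  · exact List.getD_eq_default _ _ (by simpa using h)

@[simp] theorem degree_column (j : ℕ) : (column j).degree = j := by simp [column, degree_toFinsupp]

theorem kostka_map_succ_add_column (L : List ℕ) (ρ : ℕ →₀ ℕ) :
    kostka (L.map Nat.succ) (ρ + column L.length) = kostka L ρ := by
  induction L generalizing ρ with
  | nil => simp [kostka, column]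
  | cons a L ih =>
    simp only [kostka, List.map_cons, List.length_cons, map_add, degree_column]
    refine (Finset.sum_of_injOn (· + column L.length) (fun σ _ σ' _ h => add_right_cancel h)
      (fun σ hσ => ?_) (fun σ' hσ' hnot => ?_) fun σ _ => (ih σ).symm).symm
    · simp only [Finset.coe_filter, Set.mem_ofPred_eq, mem_horizontalStrips, map_add,
        degree_column, Finsupp.add_apply, column_apply] at hσ ⊢
      refine ⟨fun i => ?_, by lia⟩
      have := hσ.1 i
      split_ifs <;> lia
    · by_contra hne
      obtain ⟨hstrip, hd⟩ := Finset.mem_filter.1 hσ'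
      simp only [mem_horizontalStrips, Finsupp.add_apply, column_apply] at hstrip
      have hle : column L.length ≤ σ' := fun i => by
        have := hstrip i
        rw [column_apply]
        split_ifs at this ⊢ <;> lia
      obtain ⟨σ, rfl⟩ := exists_add_of_le hle
      rw [add_comm] at hne hstrip hd hnot
      rw [map_add, degree_column] at hd
      refine hnot ⟨σ, Finset.mem_coe.2 (Finset.mem_filter.2 ⟨?_, by lia⟩), rfl⟩
      refine mem_horizontalStrips.2 fun i => ?_
      have hi := hstrip i
      have hlen : L.length ≤ i → (σ + column L.length) i = 0 := fun hi =>
        eq_zero_of_length_le_of_kostka_ne_zero hne (by simpa using hi)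
      simp only [Finsupp.add_apply, column_apply] at hi hlen
      split_ifs at hi hlen <;> lia

/-! ### Counting tableaux with bounded entries -/

open Polynomial in
theorem exists_antidifference (p : ℚ[X]) :
    ∃ q : ℚ[X], q.natDegree ≤ p.natDegree + 1 ∧ q.eval 0 = 0 ∧
      ∀ x, q.eval (x + 1) = q.eval x + p.eval x := by
  let q : ℚ[X] := ∑ k ∈ Finset.range (p.natDegree + 1),
    C (p.coeff k / (k + 1)) * Polynomial.bernoulli (k + 1)
  refine ⟨q - C (q.eval 0), ?_, by simp, fun x => ?_⟩
  · rw [natDegree_sub_C]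
    refine natDegree_sum_le_of_forall_le _ _ fun k hk => (natDegree_C_mul_le _ _).trans ?_
    refine natDegree_le_iff_coeff_eq_zero.2 fun i hi => ?_
    rw [coeff_bernoulli, if_neg]
    have := Finset.mem_range.1 hk
    lia
  · rw [eval_sub, eval_sub, eval_C, eval_C, sub_add_eq_add_sub, sub_left_inj]
    simp only [q, eval_finsetSum, eval_mul, eval_C]
    rw [eval_eq_sum_range, ← Finset.sum_add_distrib]
    refine Finset.sum_congr rfl fun k _ => ?_
    rw [add_comm x 1, bernoulli_eval_one_add]
    have : (k + 1 : ℚ) ≠ 0 := by positivity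
    push_cast [Nat.add_sub_cancel]
    field_simp

/-- The number of semistandard tableaux of shape `ρ` with entries in `{1, …, m}`. -/
noncomputable def numTableaux : ℕ → (ℕ →₀ ℕ) → ℕ
  | 0, ρ => if ρ = 0 then 1 else 0
  | m + 1, ρ => ∑ σ ∈ horizontalStrips ρ, numTableaux m σ

theorem sum_kostka_ofFn {B : ℕ} (m : ℕ) {ρ : ℕ →₀ ℕ} (hB : ρ.degree < B) :
    ∑ a : Fin m → Fin B, kostka (List.ofFn fun i => (a i : ℕ)) ρ = numTableaux m ρ := by
  induction m generalizing ρ with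
  | zero => simp [kostka, numTableaux]
  | succ m ih =>
    rw [← (Fin.consEquiv fun _ => Fin B).sum_comp, Fintype.sum_prod_type]
    simp only [Fin.consEquiv_apply, List.ofFn_succ, Fin.cons_zero, Fin.cons_succ, kostka,
      Finset.sum_filter, numTableaux]
    rw [Finset.sum_congr rfl fun b _ => Finset.sum_comm, Finset.sum_comm]
    refine Finset.sum_congr rfl fun σ hσ => ?_
    have hle := Finsupp.degree_mono (le_of_mem_horizontalStrips hσ)
    rw [← ih (hle.trans_lt hB), Finset.sum_eq_single ⟨ρ.degree - σ.degree, by lia⟩]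
    · exact Finset.sum_congr rfl fun a _ => if_pos (by dsimp only; lia)
    · intro b _ hb
      refine Finset.sum_eq_zero fun a _ => if_neg fun hd => hb (Fin.ext ?_)
      dsimp only
      lia
    · simp

theorem numTableaux_zero_right (m : ℕ) : numTableaux m 0 = 1 := by
  induction m with
  | zero => simp [numTableaux]
  | succ m ih =>
    have : horizontalStrips 0 = {0} := by
      ext σ
      rw [Finset.mem_singleton]
      refine ⟨fun h => nonpos_iff_eq_zero.1 (le_of_mem_horizontalStrips h), ?_⟩
      rintro rfl
      exact self_mem_horizontalStrips antitone_const
    simp [numTableaux, this, ih]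

/-- The value at `-1` of the polynomial `m ↦ numTableaux m ρ`. By the reciprocity
`s_ρ(1^{-m}) = (-1)^{|ρ|} s_{ρ'}(1^m)` it detects the one-column shapes. -/
noncomputable def columnSign (ρ : ℕ →₀ ℕ) : ℚ := if ρ = column ρ.degree then (-1) ^ ρ.degree else 0

theorem columnSign_column (j : ℕ) : columnSign (column j) = (-1) ^ j := by simp [columnSign]

theorem columnSign_eq_zero {ρ : ℕ →₀ ℕ} (h : ∀ j, ρ ≠ column j) : columnSign ρ = 0 := if_neg (h _)

theorem column_injective : Function.Injective column :=
  fun i j h => by rw [← degree_column i, h, degree_column]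

theorem column_mem_horizontalStrips_iff {ρ : ℕ →₀ ℕ} (h : Antitone ρ) {r : ℕ}
    (hr : ∀ i, ρ i = 0 ↔ r < i) (j : ℕ) :
    column j ∈ horizontalStrips ρ ↔ ρ 1 ≤ 1 ∧ (j = r ∨ j = r + 1) := by
  simp only [mem_horizontalStrips, column_apply]
  constructor
  · intro hj
    have hfirst := (hj 0).1
    have hlow : r ≤ j := by
      by_contra! hlt
      have := (hj (r - 1)).1
      have := hr (r - 1 + 1)
      split_ifs at * <;> lia
    have hhigh := (hj (r + 1)).2
    have := hr (r + 1)
    split_ifs at * <;> lia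
  · rintro ⟨h1, hj⟩ i
    have := h (Nat.le_add_left 1 i)
    have := hr i
    have := hr (i + 1)
    split_ifs <;> lia

theorem exists_forall_eq_zero_iff_lt {ρ : ℕ →₀ ℕ} (h : Antitone ρ) (h0 : ρ ≠ 0) :
    ∃ r, ∀ i, ρ i = 0 ↔ r < i := by
  obtain ⟨R, hR⟩ := exists_forall_ge_eq_zero ρ
  obtain ⟨s, hs⟩ := exists_forall_lt_iff (p := fun i => 0 < ρ i)
    (fun i j hij hj => hj.trans_le (h hij)) ⟨R, by simp [hR R le_rfl]⟩
  have hpos : 0 < s := by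
    obtain ⟨i, hi⟩ := DFunLike.ne_iff.1 h0
    exact Nat.zero_lt_of_lt ((hs i).2 (Nat.pos_of_ne_zero hi))
  refine ⟨s - 1, fun i => ?_⟩
  have := hs i
  lia

theorem sum_horizontalStrips_columnSign {ρ : ℕ →₀ ℕ} (h : Antitone ρ) (h0 : ρ ≠ 0) :
    ∑ σ ∈ horizontalStrips ρ, columnSign σ = 0 := by
  obtain ⟨r, hr⟩ := exists_forall_eq_zero_iff_lt h h0
  have hmem := column_mem_horizontalStrips_iff h hr
  by_cases h1 : ρ 1 ≤ 1
  · rw [Finset.sum_eq_add_of_mem (column r) (column (r + 1)) ((hmem _).2 ⟨h1, .inl rfl⟩)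
      ((hmem _).2 ⟨h1, .inr rfl⟩) (column_injective.ne (Nat.succ_ne_self r).symm)]
    · simp [columnSign_column, pow_succ]
    · intro σ hσ hne
      refine columnSign_eq_zero fun j => ?_
      rintro rfl
      rcases ((hmem j).1 hσ).2 with rfl | rfl
      · exact hne.1 rfl
      · exact hne.2 rfl
  · refine Finset.sum_eq_zero fun σ hσ => columnSign_eq_zero fun j => ?_
    rintro rfl
    exact h1 ((hmem j).1 hσ).1

open Polynomial in
theorem exists_polynomial_numTableaux {ρ : ℕ →₀ ℕ} (h : Antitone ρ) :
    ∃ p : ℚ[X], p.natDegree ≤ ρ.degree ∧ (∀ m : ℕ, p.eval (m : ℚ) = numTableaux m ρ) ∧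
      p.eval (-1) = columnSign ρ := by
  induction hd : ρ.degree using Nat.strong_induction_on generalizing ρ with
  | _ d ih =>
    obtain rfl | h0 := eq_or_ne ρ 0
    · have hcol : (0 : ℕ →₀ ℕ) = column 0 := by simp [column]
      refine ⟨1, by simp, by simp [numTableaux_zero_right], ?_⟩
      rw [hcol, columnSign_column, eval_one, pow_zero]
    · have hlt (σ) (hσ : σ ∈ (horizontalStrips ρ).erase ρ) : σ.degree < d := by
        obtain ⟨hne, hσ⟩ := Finset.mem_erase.1 hσ
        by_contra! hle
        exact hne (eq_of_le_of_degree_le (le_of_mem_horizontalStrips hσ) (hd.trans_le hle))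
      choose! p hpdeg hpnum hpsign using fun σ (hσ : σ ∈ (horizontalStrips ρ).erase ρ) =>
        ih σ.degree (hlt σ hσ) (antitone_of_mem_horizontalStrips (Finset.mem_of_mem_erase hσ)) rfl
      obtain ⟨q, hqdeg, hq0, hq⟩ :=
        exists_antidifference (∑ σ ∈ (horizontalStrips ρ).erase ρ, p σ)
      have hdeg : (∑ σ ∈ (horizontalStrips ρ).erase ρ, p σ).natDegree ≤ d - 1 :=
        natDegree_sum_le_of_forall_le _ _ fun σ hσ =>
          (hpdeg σ hσ).trans (Nat.le_sub_one_of_lt (hlt σ hσ))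
      have hd0 : d ≠ 0 := by rwa [← hd, ne_eq, Finsupp.degree_eq_zero_iff]
      refine ⟨q, by lia, fun m => ?_, ?_⟩
      · induction m with
        | zero => simp [numTableaux, h0, hq0]
        | succ m ihm =>
          rw [numTableaux, ← Finset.add_sum_erase _ _ (self_mem_horizontalStrips h)]
          push_cast
          rw [hq, ihm, eval_finsetSum, Finset.sum_congr rfl fun σ hσ => hpnum σ hσ m]
      · have hsum := sum_horizontalStrips_columnSign h h0
        have hneg := hq (-1)
        rw [← Finset.add_sum_erase _ _ (self_mem_horizontalStrips h)] at hsum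
        rw [neg_add_cancel, hq0, eval_finsetSum, Finset.sum_congr rfl hpsign] at hneg
        linear_combination -hsum - hneg

/-! ### The specialized net polynomial -/

open Polynomial in
/-- The polynomial in `m` obtained from `∑ k, (-1)^k e_k p₁^{n-k}` by setting `m` variables to `1`
and the others to `0`. -/
noncomputable def netPolynomial (n : ℕ) : ℚ[X] :=
  ∑ k ∈ Finset.range (n + 1),
    C ((-1) ^ k / (k.factorial : ℚ)) * (X ^ (n - k) * descPochhammer ℚ k)

theorem natDegree_netPolynomial_le (n : ℕ) : (netPolynomial n).natDegree ≤ n := by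
  refine Polynomial.natDegree_sum_le_of_forall_le _ _ fun k hk => ?_
  refine (Polynomial.natDegree_C_mul_le _ _).trans (Polynomial.natDegree_mul_le.trans ?_)
  rw [Polynomial.natDegree_X_pow, descPochhammer_natDegree]
  have := Finset.mem_range.1 hk
  lia

theorem eval_natCast_netPolynomial {n m : ℕ} (h : m ≤ n) :
    (netPolynomial n).eval (m : ℚ) = ((m : ℚ) - 1) ^ m * (m : ℚ) ^ (n - m) := by
  calc (netPolynomial n).eval (m : ℚ)
      = ∑ k ∈ Finset.range (n + 1), (-1 : ℚ) ^ k * m ^ (n - k) * m.choose k := by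
        simp only [netPolynomial, Polynomial.eval_finsetSum, Polynomial.eval_mul,
          Polynomial.eval_C, Polynomial.eval_pow, Polynomial.eval_X,
          Nat.cast_choose_eq_descPochhammer_div]
        exact Finset.sum_congr rfl fun k _ => by ring
    _ = ∑ k ∈ Finset.range (m + 1), (-1 : ℚ) ^ k * m ^ (n - k) * m.choose k := by
        refine (Finset.sum_subset (Finset.range_subset_range.2 (by lia)) fun k _ hk => ?_).symm
        rw [Nat.choose_eq_zero_of_lt (by simpa using hk), Nat.cast_zero, mul_zero]
    _ = (∑ k ∈ Finset.range (m + 1), (-1 : ℚ) ^ k * m ^ (m - k) * m.choose k) * m ^ (n - m) := by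
        rw [Finset.sum_mul]
        refine Finset.sum_congr rfl fun k hk => ?_
        have := Finset.mem_range.1 hk
        rw [show n - k = (m - k) + (n - m) by lia, pow_add]
        ring
    _ = ((m : ℚ) - 1) ^ m * (m : ℚ) ^ (n - m) := by
        rw [sub_eq_add_neg, add_comm (m : ℚ), add_pow]

theorem eval_neg_one_descPochhammer (k : ℕ) :
    (descPochhammer ℚ k).eval (-1) = (-1) ^ k * k.factorial := by
  have h := ascPochhammer_eval_neg_eq_descPochhammer ℚ (-1) k
  rw [neg_neg, ascPochhammer_eval_one] at h
  rw [h, ← mul_assoc, ← mul_pow, neg_one_mul, neg_neg, one_pow, one_mul]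

theorem eval_neg_one_netPolynomial (n : ℕ) :
    (netPolynomial n).eval (-1) = if Even n then 1 else 0 := by
  have hterm (k) (hk : k ∈ Finset.range (n + 1)) : ((-1 : ℚ) ^ k / k.factorial) *
      ((-1) ^ (n - k) * ((-1) ^ k * k.factorial)) = (-1) ^ n * (-1) ^ k := by
    have hfact : (k.factorial : ℚ) ≠ 0 := by positivity
    rw [← Nat.add_sub_of_le (Nat.le_of_lt_succ (Finset.mem_range.1 hk)), pow_add]
    simp only [Nat.add_sub_cancel_left]
    field_simp
  simp only [netPolynomial, Polynomial.eval_finsetSum, Polynomial.eval_mul, Polynomial.eval_C,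
    Polynomial.eval_pow, Polynomial.eval_X, eval_neg_one_descPochhammer]
  rw [Finset.sum_congr rfl hterm, ← Finset.mul_sum, neg_one_geom_sum]
  rcases n.even_or_odd with hn | hn
  · simp [hn, Nat.even_add_one]
  · simp [Nat.not_even_iff_odd.2 hn, Nat.even_add_one]

/-! ### Counting tableaux by weight -/

/-- The weight in which label `k + 1` has multiplicity `L[k]`; labels are positive. -/
def weightOfList (L : List ℕ) : ℕ → ℕ
  | 0 => 0
  | k + 1 => L.getD k 0

theorem weightOfList_eq_zero {L : List ℕ} {k : ℕ} (h : L.length < k) : weightOfList L k = 0 := by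
  obtain ⟨k, rfl⟩ := Nat.exists_eq_add_of_lt (Nat.zero_lt_of_lt h)
  exact List.getD_eq_default _ _ (by lia)

theorem weightOfList_append_singleton (L : List ℕ) (a : ℕ) :
    weightOfList (L ++ [a]) = Function.update (weightOfList L) (L.length + 1) a := by
  funext k
  obtain _ | k := k
  · simp [weightOfList]
  · rcases lt_trichotomy k L.length with h | rfl | h
    · rw [Function.update_of_ne (by lia)]
      exact List.getD_append _ _ _ _ h
    · simp [weightOfList]
    · rw [weightOfList_eq_zero (by simp; lia), Function.update_of_ne (by lia),
        weightOfList_eq_zero (by lia)]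

theorem weightOfList_append_replicate_zero (L : List ℕ) (k : ℕ) :
    weightOfList (L ++ List.replicate k 0) = weightOfList L := by
  induction k with
  | zero => simp
  | succ k ih =>
    rw [List.replicate_succ', ← List.append_assoc, weightOfList_append_singleton, ih,
      Function.update_eq_self_iff, weightOfList_eq_zero (by simp)]

/-- The cells of the shape with row lengths `ρ`. -/
noncomputable def cells (ρ : ℕ →₀ ℕ) : Finset Cell :=
  (ρ.support.sigma fun i => Finset.range (ρ i)).map (Equiv.sigmaEquivProd ℕ ℕ).toEmbedding

theorem mem_cells {ρ : ℕ →₀ ℕ} {i j : ℕ} : (i, j) ∈ cells ρ ↔ j < ρ i := by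
  simp only [cells, Finset.mem_map_equiv, Finset.mem_sigma, Finset.mem_range,
    Equiv.sigmaEquivProd_symm_apply, Finsupp.mem_support_iff, and_iff_right_iff_imp]
  exact fun h => (Nat.zero_lt_of_lt h).ne'

theorem card_cells (ρ : ℕ →₀ ℕ) : (cells ρ).card = ρ.degree := by
  simp [cells, Finsupp.degree_apply]

theorem cells_mono {ρ σ : ℕ →₀ ℕ} (h : σ ≤ ρ) : cells σ ⊆ cells ρ :=
  fun ⟨i, _⟩ hc => mem_cells.2 ((mem_cells.1 hc).trans_le (h i))

/-- Semistandard tableaux whose shape has row lengths `ρ`, of weight `μ`, normalized to be `0` off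
the shape. -/
structure IsTableau (ρ : ℕ →₀ ℕ) (μ : ℕ → ℕ) (t : Cell → ℕ) : Prop where
  eq_zero : ∀ i j, ρ i ≤ j → t (i, j) = 0
  pos : ∀ i j, j < ρ i → 0 < t (i, j)
  row_le : ∀ i j, j + 1 < ρ i → t (i, j) ≤ t (i, j + 1)
  col_lt : ∀ i j, j < ρ (i + 1) → t (i, j) < t (i + 1, j)
  card_eq : ∀ k, {c ∈ cells ρ | t c = k}.card = μ k

namespace IsTableau

variable {ρ σ : ℕ →₀ ℕ} {μ : ℕ → ℕ} {t : Cell → ℕ}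

theorem lt_of_forall_weight_eq_zero (h : IsTableau ρ μ t) {k : ℕ} (hμ : ∀ l, k ≤ l → μ l = 0)
    {i j : ℕ} (hj : j < ρ i) : t (i, j) < k := by
  by_contra hk
  have hempty := (h.card_eq _).trans (hμ _ (not_lt.1 hk))
  exact Finset.notMem_empty (i, j) <|
    Finset.card_eq_zero.1 hempty ▸ Finset.mem_filter.2 ⟨mem_cells.2 hj, rfl⟩

theorem row_monotone (h : IsTableau ρ μ t) {i j d : ℕ} (hd : j + d < ρ i) :
    t (i, j) ≤ t (i, j + d) := by
  induction d with
  | zero => exact le_rfl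
  | succ d ih => exact (ih (by lia)).trans (h.row_le i (j + d) hd)

end IsTableau

/-- The filling of the shape `ρ` that agrees with `t` on `σ` and has label `k` on `ρ / σ`. -/
noncomputable def extendFilling (ρ σ : ℕ →₀ ℕ) (k : ℕ) (t : Cell → ℕ) (c : Cell) : ℕ :=
  if c ∈ cells σ then t c else if c ∈ cells ρ then k else 0

section

variable {ρ σ : ℕ →₀ ℕ} {μ : ℕ → ℕ} {t : Cell → ℕ} {k a : ℕ}

theorem extendFilling_apply (i j : ℕ) :
    extendFilling ρ σ k t (i, j) = if j < σ i then t (i, j) else if j < ρ i then k else 0 := by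
  simp only [extendFilling, mem_cells]

theorem card_extendFilling_eq_self (h : IsTableau σ μ t) (hμ : ∀ l, k ≤ l → μ l = 0)
    (hσ : σ ≤ ρ) : {c ∈ cells ρ | extendFilling ρ σ k t c = k}.card + σ.degree = ρ.degree := by
  have hfilter : {c ∈ cells ρ | extendFilling ρ σ k t c = k} = cells ρ \ cells σ := by
    ext ⟨i, j⟩
    have := h.lt_of_forall_weight_eq_zero hμ (i := i) (j := j)
    simp only [Finset.mem_filter, Finset.mem_sdiff, mem_cells, extendFilling_apply]
    grind
  rw [hfilter, Finset.card_sdiff_of_subset (cells_mono hσ), card_cells, card_cells,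
    Nat.sub_add_cancel (Finsupp.degree_mono hσ)]

theorem card_extendFilling_eq_of_ne (hσ : σ ≤ ρ) {l : ℕ} (hl : l ≠ k) :
    {c ∈ cells ρ | extendFilling ρ σ k t c = l}.card = {c ∈ cells σ | t c = l}.card := by
  congr 1
  ext ⟨i, j⟩
  have := hσ i
  simp only [Finset.mem_filter, mem_cells, extendFilling_apply]
  grind

theorem isTableau_extendFilling (h : IsTableau σ μ t) (hμ : ∀ l, k ≤ l → μ l = 0)
    (hk : 0 < k) (hσ : σ ∈ horizontalStrips ρ) (hd : ρ.degree = σ.degree + a) :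
    IsTableau ρ (Function.update μ k a) (extendFilling ρ σ k t) := by
  have hstrip := mem_horizontalStrips.1 hσ
  have hlt := fun i j => h.lt_of_forall_weight_eq_zero hμ (i := i) (j := j)
  refine ⟨fun i j hj => ?_, fun i j hj => ?_, fun i j hj => ?_, fun i j hj => ?_, fun l => ?_⟩
  · have := hstrip i
    simp only [extendFilling_apply]
    grind
  · have := h.pos i j
    simp only [extendFilling_apply]
    grind
  · have := h.row_le i j
    have := hlt i j
    simp only [extendFilling_apply]
    grind
  · have := h.col_lt i j
    have := hlt i j
    have := hstrip i
    simp only [extendFilling_apply]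
    grind
  · rcases eq_or_ne l k with rfl | hl
    · have := card_extendFilling_eq_self h hμ (le_of_mem_horizontalStrips hσ)
      rw [Function.update_self]
      lia
    · rw [card_extendFilling_eq_of_ne (le_of_mem_horizontalStrips hσ) hl, h.card_eq,
        Function.update_of_ne hl]

theorem lt_and_extendFilling_lt_iff (h : IsTableau σ μ t) (hμ : ∀ l, k ≤ l → μ l = 0)
    (hσ : σ ≤ ρ) (i j : ℕ) : j < ρ i ∧ extendFilling ρ σ k t (i, j) < k ↔ j < σ i := by
  have := h.lt_of_forall_weight_eq_zero hμ (i := i) (j := j)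
  have := hσ i
  rw [extendFilling_apply]
  grind

theorem extendFilling_inj {σ' : ℕ →₀ ℕ} {t' : Cell → ℕ} (h : IsTableau σ μ t)
    (h' : IsTableau σ' μ t') (hμ : ∀ l, k ≤ l → μ l = 0) (hσ : σ ≤ ρ) (hσ' : σ' ≤ ρ)
    (heq : extendFilling ρ σ k t = extendFilling ρ σ' k t') : σ = σ' ∧ t = t' := by
  obtain rfl : σ = σ' := Finsupp.ext fun i => eq_of_forall_lt_iff fun j => by
    rw [← lt_and_extendFilling_lt_iff h hμ hσ, heq, lt_and_extendFilling_lt_iff h' hμ hσ']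
  refine ⟨rfl, funext fun ⟨i, j⟩ => ?_⟩
  rcases lt_or_ge j (σ i) with hj | hj
  · simpa [extendFilling_apply, hj] using congrFun heq (i, j)
  · rw [h.eq_zero i j hj, h'.eq_zero i j hj]

theorem IsTableau.exists_horizontalStrip (h : IsTableau ρ μ t) (hρ : Antitone ρ)
    (hμ : ∀ l, k < l → μ l = 0) :
    ∃ σ ∈ horizontalStrips ρ, ∀ i j, j < σ i ↔ j < ρ i ∧ t (i, j) < k := by
  have hrow (i : ℕ) : ∃ s, ∀ j, j < s ↔ j < ρ i ∧ t (i, j) < k := by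
    refine exists_forall_lt_iff (fun a b hab hb => ⟨by lia, ?_⟩) ⟨ρ i, by simp⟩
    have := h.row_monotone (i := i) (j := a) (d := b - a) (by lia)
    rw [Nat.add_sub_cancel' hab] at this
    exact this.trans_lt hb.2
  choose s hs using hrow
  have hle (i : ℕ) : s i ≤ ρ i := not_lt.1 fun hlt => lt_irrefl _ ((hs i (ρ i)).1 hlt).1
  refine ⟨Finsupp.onFinset ρ.support s fun i hi => Finsupp.mem_support_iff.2 ?_,
    mem_horizontalStrips.2 fun i => ⟨not_lt.1 fun hlt => ?_, hle i⟩, hs⟩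
  · have := hle i
    lia
  · rw [Finsupp.onFinset_apply] at hlt
    have hcol := h.col_lt i (s i) hlt
    have htop := h.lt_of_forall_weight_eq_zero (k := k + 1) hμ hlt
    exact lt_irrefl _ ((hs i (s i)).2 ⟨hlt.trans_le (hρ (Nat.le_succ i)), by lia⟩)

theorem IsTableau.indicator (h : IsTableau ρ (Function.update μ k a) t) (hρ : Antitone ρ)
    (hμ : ∀ l, k ≤ l → μ l = 0) (hσ : ∀ i j, j < σ i ↔ j < ρ i ∧ t (i, j) < k) :
    IsTableau σ μ (Set.indicator (cells σ) t) := by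
  have happly (i j : ℕ) : Set.indicator (cells σ) t (i, j) = if j < σ i then t (i, j) else 0 := by
    simp only [Set.indicator_apply, Finset.mem_coe, mem_cells]
  refine ⟨fun i j hj => ?_, fun i j hj => ?_, fun i j hj => ?_, fun i j hj => ?_, fun l => ?_⟩
  · rw [happly, if_neg (by lia)]
  · rw [happly, if_pos hj]
    exact h.pos i j ((hσ i j).1 hj).1
  · rw [happly, happly, if_pos hj, if_pos (by lia)]
    exact h.row_le i j ((hσ i _).1 hj).1
  · have hlt := (hσ (i + 1) j).1 hj
    have hcol := h.col_lt i j hlt.1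
    rw [happly, happly, if_pos hj, if_pos ((hσ i j).2
      ⟨hlt.1.trans_le (hρ (Nat.le_succ i)), hcol.trans hlt.2⟩)]
    exact hcol
  · rcases lt_or_ge l k with hl | hl
    · rw [← Function.update_of_ne hl.ne a μ, ← h.card_eq]
      congr 1
      ext ⟨i, j⟩
      have := hσ i j
      simp only [Finset.mem_filter, mem_cells, happly]
      grind
    · rw [hμ l hl, Finset.card_eq_zero, Finset.filter_eq_empty_iff]
      rintro ⟨i, j⟩ hc
      have := hσ i j
      rw [mem_cells] at hc
      rw [happly, if_pos hc]
      lia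

theorem IsTableau.extendFilling_indicator (h : IsTableau ρ μ t)
    (hμ : ∀ l, k < l → μ l = 0) (hσ : ∀ i j, j < σ i ↔ j < ρ i ∧ t (i, j) < k) :
    extendFilling ρ σ k (Set.indicator (cells σ) t) = t := by
  funext ⟨i, j⟩
  have := hσ i j
  have := h.eq_zero i j
  have := h.lt_of_forall_weight_eq_zero (k := k + 1) hμ (i := i) (j := j)
  simp only [extendFilling_apply, Set.indicator_apply, Finset.mem_coe, mem_cells]
  grind

theorem IsTableau.exists_eq_extendFilling (h : IsTableau ρ (Function.update μ k a) t)
    (hρ : Antitone ρ) (hμ : ∀ l, k ≤ l → μ l = 0) :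
    ∃ σ ∈ horizontalStrips ρ, ρ.degree = σ.degree + a ∧
      ∃ t', IsTableau σ μ t' ∧ extendFilling ρ σ k t' = t := by
  have hμ' (l : ℕ) (hl : k < l) : Function.update μ k a l = 0 := by
    rw [Function.update_of_ne hl.ne', hμ l hl.le]
  obtain ⟨σ, hmem, hσ⟩ := h.exists_horizontalStrip hρ hμ'
  have hext := h.extendFilling_indicator hμ' hσ
  have htab := h.indicator hρ hμ hσ
  refine ⟨σ, hmem, ?_, _, htab, hext⟩
  have hcard := card_extendFilling_eq_self htab hμ (le_of_mem_horizontalStrips hmem)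
  rw [hext, h.card_eq, Function.update_self] at hcard
  lia

theorem bijective_extendFilling (hρ : Antitone ρ) (hμ : ∀ l, k ≤ l → μ l = 0) (hk : 0 < k) :
    Function.Bijective
      (fun x : Σ σ : {σ ∈ horizontalStrips ρ | ρ.degree = σ.degree + a},
          {t // IsTableau σ μ t} =>
        (⟨extendFilling ρ x.1 k x.2, isTableau_extendFilling x.2.2 hμ hk
          (Finset.mem_filter.1 x.1.2).1 (Finset.mem_filter.1 x.1.2).2⟩ :
          {t // IsTableau ρ (Function.update μ k a) t})) := by
  refine ⟨?_, fun ⟨t, ht⟩ => ?_⟩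
  · rintro ⟨⟨σ, hσ⟩, t, ht⟩ ⟨⟨σ', hσ'⟩, t', ht'⟩ heq
    obtain ⟨rfl, rfl⟩ := extendFilling_inj ht ht' hμ
      (le_of_mem_horizontalStrips (Finset.mem_filter.1 hσ).1)
      (le_of_mem_horizontalStrips (Finset.mem_filter.1 hσ').1) (congrArg Subtype.val heq)
    rfl
  · obtain ⟨σ, hσ, hd, t', ht', heq⟩ := ht.exists_eq_extendFilling hρ hμ
    exact ⟨⟨⟨σ, Finset.mem_filter.2 ⟨hσ, hd⟩⟩, t', ht'⟩, Subtype.ext heq⟩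

end

theorem isTableau_nil_iff {ρ : ℕ →₀ ℕ} {t : Cell → ℕ} :
    IsTableau ρ (weightOfList []) t ↔ ρ = 0 ∧ t = 0 := by
  refine ⟨fun h => ?_, ?_⟩
  · have hρ : ρ = 0 := Finsupp.ext fun i => Nat.eq_zero_of_not_pos fun hi => by
      have := h.pos i 0 hi
      have := h.lt_of_forall_weight_eq_zero (k := 1) (fun l hl => weightOfList_eq_zero hl) hi
      lia
    subst hρ
    exact ⟨rfl, funext fun ⟨i, j⟩ => h.eq_zero i j (Nat.zero_le j)⟩
  · rintro ⟨rfl, rfl⟩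
    refine ⟨by simp, by simp, by simp, by simp, fun k => ?_⟩
    cases k <;> simp [cells, weightOfList]

theorem finite_and_card_isTableau (L : List ℕ) {ρ : ℕ →₀ ℕ} (hρ : Antitone ρ) :
    Finite {t // IsTableau ρ (weightOfList L) t} ∧
      Nat.card {t // IsTableau ρ (weightOfList L) t} = kostka L.reverse ρ := by
  induction L using List.reverseRecOn generalizing ρ with
  | nil =>
    simp only [isTableau_nil_iff, List.reverse_nil, kostka]
    by_cases h : ρ = 0
    · simp only [h, true_and, if_true]
      exact ⟨inferInstance, Nat.card_unique⟩
    · simp only [h, false_and, if_false]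
      exact ⟨inferInstance, Nat.card_of_isEmpty⟩
  | append_singleton L a ih =>
    rw [weightOfList_append_singleton]
    have hbij := bijective_extendFilling (μ := weightOfList L) (a := a) hρ
      (fun l hl => weightOfList_eq_zero hl) (Nat.succ_pos L.length)
    have hanti (σ : {σ ∈ horizontalStrips ρ | ρ.degree = σ.degree + a}) : Antitone σ.1 :=
      antitone_of_mem_horizontalStrips (Finset.mem_filter.1 σ.2).1
    have (σ : {σ ∈ horizontalStrips ρ | ρ.degree = σ.degree + a}) :=
      (ih (hanti σ)).1
    refine ⟨Finite.of_surjective _ hbij.2, ?_⟩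
    rw [← Nat.card_congr (Equiv.ofBijective _ hbij), Nat.card_sigma, List.reverse_concat, kostka]
    exact (Finset.sum_congr rfl fun σ _ => (ih (hanti σ)).2).trans (Finset.sum_coe_sort _ _)

theorem card_isTableau (L : List ℕ) {ρ : ℕ →₀ ℕ} (hρ : Antitone ρ) :
    Nat.card {t // IsTableau ρ (weightOfList L) t} = kostka L ρ :=
  (finite_and_card_isTableau L hρ).2.trans (kostka_perm L.reverse_perm ρ)

theorem exists_weightOfList_eq {α : Type*} [Finite α] {g : α → ℕ} (hg : ∀ a, 0 < g a) :
    ∃ L : List ℕ, L.sum = Nat.card α ∧ ∀ k, Nat.card {a // g a = k} = weightOfList L k := by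
  have := Fintype.ofFinite α
  have hle (a : α) : g a ≤ Finset.univ.sup g := Finset.le_sup (Finset.mem_univ a)
  refine ⟨List.ofFn fun i : Fin (Finset.univ.sup g) => Nat.card {a // g a = i + 1}, ?_, ?_⟩
  · rw [List.sum_ofFn, ← Finset.sum_range fun i => Nat.card {a // g a = i + 1},
      Nat.card_eq_fintype_card, ← Finset.card_univ, Finset.card_eq_sum_card_fiberwise
        (f := fun a => g a - 1) (t := Finset.range (Finset.univ.sup g))]
    · refine Finset.sum_congr rfl fun i _ => Nat.subtype_card _ fun a => ?_
      have := hg a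
      simp only [Finset.mem_filter, Finset.mem_univ, true_and]
      lia
    · intro a _
      have := hg a
      have := hle a
      simp only [Finset.coe_range, Set.mem_Iio]
      lia
  · rintro (_ | k)
    · have : IsEmpty {a // g a = 0} := ⟨fun a => (hg a.1).ne' a.2⟩
      exact Nat.card_of_isEmpty
    · rcases lt_or_ge k (Finset.univ.sup g) with hk | hk
      · simp [weightOfList, hk]
      · have : IsEmpty {a // g a = k + 1} := ⟨fun a => by have := hle a.1; have := a.2; lia⟩
        rw [Nat.card_of_isEmpty, weightOfList_eq_zero (by rw [List.length_ofFn]; lia)]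

theorem exists_perm_succ_eq (e : Equiv.Perm ℕ) :
    ∃ e' : Equiv.Perm ℕ, e' 0 = 0 ∧ ∀ k, e' (k + 1) = e k + 1 :=
  ⟨e.viaEmbedding ⟨Nat.succ, Nat.succ_injective⟩,
    Equiv.Perm.viaEmbedding_apply_of_notMem _ _ _ (by simp),
    fun k => e.viaEmbedding_apply ⟨Nat.succ, Nat.succ_injective⟩ k⟩

theorem exists_perm_getD_eq {L L' : List ℕ} (h : L.Perm L') :
    ∃ e : Equiv.Perm ℕ, ∀ k, L.getD k 0 = L'.getD (e k) 0 := by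
  induction h with
  | nil => exact ⟨1, fun _ => rfl⟩
  | cons a _ ih =>
    obtain ⟨e, he⟩ := ih
    obtain ⟨e', h0, hsucc⟩ := exists_perm_succ_eq e
    refine ⟨e', ?_⟩
    rintro (_ | k)
    · rw [h0]
      rfl
    · rw [hsucc]
      exact he k
  | swap a b L =>
    refine ⟨Equiv.swap 0 1, ?_⟩
    rintro (_ | _ | k)
    · simp
    · simp
    · rw [Equiv.swap_apply_of_ne_of_ne (by lia) (by lia)]
      rfl
  | trans _ _ ih ih' =>
    obtain ⟨e, he⟩ := ih
    obtain ⟨e', he'⟩ := ih'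
    exact ⟨e.trans e', fun k => (he k).trans (he' _)⟩

theorem exists_perm_weightOfList_eq {L L' : List ℕ} (h : L.Perm L') :
    ∃ e : Equiv.Perm ℕ, e 0 = 0 ∧ weightOfList L = weightOfList L' ∘ e := by
  obtain ⟨e, he⟩ := exists_perm_getD_eq h
  obtain ⟨e', h0, hsucc⟩ := exists_perm_succ_eq e
  refine ⟨e', h0, funext ?_⟩
  rintro (_ | k)
  · rw [Function.comp_apply, h0]
    rfl
  · rw [Function.comp_apply, hsucc]
    exact he k

/-! ### Partitions and Schur expansions -/

theorem sum_take_eq_sum_range (L : List ℕ) (k : ℕ) :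
    (L.take k).sum = ∑ i ∈ Finset.range k, L.toFinsupp i := by
  induction k with
  | zero => simp
  | succ k ih =>
    rw [Finset.sum_range_succ, ← ih]
    rcases lt_or_ge k L.length with hk | hk
    · rw [List.sum_take_succ _ _ hk, List.toFinsupp_apply_lt _ k hk]
    · rw [List.toFinsupp_apply_le _ k hk, List.take_of_length_le hk,
        List.take_of_length_le (by lia), add_zero]

section

variable {N : ℕ}

/-- The parts of a partition in weakly decreasing order, sorted as in `rowLen`. -/
noncomputable def partsDesc (ν : Nat.Partition N) : List ℕ := (ν.parts.sort (· ≤ ·)).reverse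

/-- The row lengths of a partition, as a finitely supported function. -/
noncomputable def rows (ν : Nat.Partition N) : ℕ →₀ ℕ := (partsDesc ν).toFinsupp

theorem coe_partsDesc (ν : Nat.Partition N) : (partsDesc ν : Multiset ℕ) = ν.parts := by
  rw [partsDesc, Multiset.coe_reverse, Multiset.sort_eq]

theorem length_partsDesc (ν : Nat.Partition N) : (partsDesc ν).length = ν.parts.card := by
  rw [← Multiset.coe_card, coe_partsDesc]

theorem sum_partsDesc (ν : Nat.Partition N) : (partsDesc ν).sum = N := by
  rw [← Multiset.sum_coe, coe_partsDesc, ν.parts_sum]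

theorem pairwise_partsDesc (ν : Nat.Partition N) : (partsDesc ν).Pairwise (· ≥ ·) :=
  List.pairwise_reverse.2 (Multiset.pairwise_sort _ _)

theorem degree_rows (ν : Nat.Partition N) : (rows ν).degree = N := by
  rw [rows, degree_toFinsupp, sum_partsDesc]

theorem rows_ne_zero_iff {ν : Nat.Partition N} {i : ℕ} : rows ν i ≠ 0 ↔ i < ν.parts.card := by
  rw [← length_partsDesc]
  rcases lt_or_ge i (partsDesc ν).length with hi | hi
  · have hmem : (partsDesc ν)[i] ∈ ν.parts := by
      rw [← coe_partsDesc]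
      exact List.getElem_mem hi
    rw [rows, List.toFinsupp_apply_lt _ i hi]
    exact iff_of_true (ν.parts_pos hmem).ne' hi
  · rw [rows, List.toFinsupp_apply_le _ i hi]
    exact iff_of_false (by simp) hi.not_gt

theorem antitone_rows (ν : Nat.Partition N) : Antitone (rows ν) := by
  refine antitone_nat_of_succ_le fun i => ?_
  rcases lt_or_ge (i + 1) (partsDesc ν).length with hi | hi
  · rw [rows, List.toFinsupp_apply_lt _ _ hi, List.toFinsupp_apply_lt _ i (by lia)]
    exact List.pairwise_iff_getElem.1 (pairwise_partsDesc ν) i (i + 1) _ hi (Nat.lt_succ_self i)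
  · rw [rows, List.toFinsupp_apply_le _ _ hi]
    exact Nat.zero_le _

theorem rows_injective : Function.Injective (rows : Nat.Partition N → ℕ →₀ ℕ) := by
  intro ν ν' h
  have hcard : ν.parts.card = ν'.parts.card := eq_of_forall_lt_iff fun i => by
    rw [← rows_ne_zero_iff, h, rows_ne_zero_iff]
  have hdesc : partsDesc ν = partsDesc ν' := by
    refine List.ext_getElem (by rw [length_partsDesc, length_partsDesc, hcard]) fun i hi hi' => ?_
    rw [← List.toFinsupp_apply_lt _ i hi, ← List.toFinsupp_apply_lt _ i hi']
    exact DFunLike.congr_fun h i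
  exact Nat.Partition.ext (by rw [← coe_partsDesc, hdesc, coe_partsDesc])

theorem exists_perm_partsDesc_append {L : List ℕ} (hL : L.sum = N) :
    ∃ (ν : Nat.Partition N) (k : ℕ), L.Perm (partsDesc ν ++ List.replicate k 0) := by
  refine ⟨Nat.Partition.ofSums N L hL, L.count 0, Multiset.coe_eq_coe.1 ?_⟩
  rw [← Multiset.coe_add, coe_partsDesc, Multiset.coe_replicate, ← Multiset.coe_count,
    ← Multiset.filter_eq', add_comm]
  exact (Multiset.filter_add_not _ _).symm

/-- The sum of all partial sums, a rank function for the dominance order. -/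
noncomputable def dominanceRank (ν : Nat.Partition N) : ℕ :=
  ∑ k ∈ Finset.range (N + 1), ∑ i ∈ Finset.range k, rows ν i

theorem dominanceRank_lt_of_kostka_ne_zero {μ ν : Nat.Partition N}
    (h : kostka (partsDesc μ) (rows ν) ≠ 0) (hne : ν ≠ μ) :
    dominanceRank μ < dominanceRank ν := by
  have hdom (k : ℕ) : ∑ i ∈ Finset.range k, rows μ i ≤ ∑ i ∈ Finset.range k, rows ν i :=
    (sum_take_eq_sum_range _ k).symm.trans_le (sum_take_le_of_kostka_ne_zero h k)
  refine (Finset.sum_le_sum fun k _ => hdom k).lt_of_ne fun heq => hne (rows_injective ?_)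
  have hsum := (Finset.sum_eq_sum_iff_of_le fun k _ => hdom k).1 heq
  have hcard (τ : Nat.Partition N) : τ.parts.card ≤ N := by
    simpa [τ.parts_sum] using Multiset.card_nsmul_le_sum fun x hx => τ.parts_pos (i := x) hx
  ext i
  rcases lt_or_ge i N with hi | hi
  · have hi' := hsum i (by simp; lia)
    have hi'' := hsum (i + 1) (by simp; lia)
    rw [Finset.sum_range_succ, Finset.sum_range_succ] at hi''
    lia
  · rw [not_not.1 (rows_ne_zero_iff.not.2 ((hcard ν).trans hi).not_gt),
      not_not.1 (rows_ne_zero_iff.not.2 ((hcard μ).trans hi).not_gt)]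

theorem eq_zero_of_triangular {ι : Type*} [Fintype ι] {K : Matrix ι ι ℚ} {D : ι → ℕ}
    (hdiag : ∀ i, K i i ≠ 0) (hlt : ∀ i j, K i j ≠ 0 → j ≠ i → D i < D j) {P : ι → Prop}
    (hP : ∀ i j, K i j ≠ 0 → P i → P j) {c : ι → ℚ} (hc : ∀ i, P i → K.mulVec c i = 0) {i : ι}
    (hi : P i) : c i = 0 := by
  by_contra hne
  obtain ⟨m, hm, hmax⟩ := Finset.exists_max_image {j | P j ∧ c j ≠ 0} D ⟨i, by simp [hi, hne]⟩
  simp only [Finset.mem_filter, Finset.mem_univ, true_and] at hm hmax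
  refine mul_ne_zero (hdiag m) hm.2 ((Finset.sum_eq_single m (fun j _ hj => ?_) ?_).symm.trans
    (hc m hm.1))
  · by_contra hKc
    obtain ⟨hK, hcj⟩ := mul_ne_zero_iff.1 hKc
    exact (hlt m j hK hj).not_ge (hmax j ⟨hP m j hK hm.1, hcj⟩)
  · simp

/-- The matrix of Kostka numbers: row `μ` holds the coefficients of the monomial `x ^ μ` in the
Schur functions. -/
noncomputable def kostkaMatrix (N : ℕ) : Matrix (Nat.Partition N) (Nat.Partition N) ℚ :=
  .of fun μ ν => kostka (partsDesc μ) (rows ν)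

theorem kostkaMatrix_mulVec_apply (c : Nat.Partition N → ℚ) (μ : Nat.Partition N) :
    (kostkaMatrix N).mulVec c μ = ∑ ν, c ν * (kostka (partsDesc μ) (rows ν) : ℚ) := by
  simp [kostkaMatrix, Matrix.mulVec, dotProduct, mul_comm]

theorem eq_zero_of_kostkaMatrix_mulVec_eq_zero {P : Nat.Partition N → Prop}
    (hP : ∀ μ ν, kostka (partsDesc μ) (rows ν) ≠ 0 → P μ → P ν) {c : Nat.Partition N → ℚ}
    (hc : ∀ μ, P μ → (kostkaMatrix N).mulVec c μ = 0) {ν : Nat.Partition N} (hν : P ν) :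
    c ν = 0 :=
  eq_zero_of_triangular (D := dominanceRank)
    (fun μ => Nat.cast_ne_zero.2 (kostka_toFinsupp_ne_zero (pairwise_partsDesc μ)))
    (fun _ _ h => dominanceRank_lt_of_kostka_ne_zero (Nat.cast_ne_zero.1 h))
    (fun μ ν h => hP μ ν (Nat.cast_ne_zero.1 h)) hc hν

theorem kostkaMatrix_mulVec_surjective : Function.Surjective (kostkaMatrix N).mulVec := by
  rw [Matrix.mulVec_surjective_iff_isUnit, ← Matrix.mulVec_injective_iff_isUnit]
  refine (injective_iff_map_eq_zero (kostkaMatrix N).mulVecLin).2 fun c hc => funext fun ν => ?_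
  exact eq_zero_of_kostkaMatrix_mulVec_eq_zero (P := fun _ => True) (fun _ _ _ h => h)
    (fun μ _ => congrFun hc μ) trivial

theorem card_mem_diag_eq (ν : Nat.Partition N) (t : Cell → ℕ) (k : ℕ) :
    Nat.card {c : Cell // c ∈ diag ν ∧ t c = k} = {c ∈ cells (rows ν) | t c = k}.card :=
  Nat.subtype_card _ fun c => by rw [Finset.mem_filter, mem_cells]; rfl

theorem schurFn_eq_card_isTableau (ν : Nat.Partition N) (μ : ℕ → ℕ) :
    schurFn ν μ = Nat.card {t // IsTableau (rows ν) μ t} := by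
  refine congrArg _ (Nat.card_congr (Equiv.subtypeEquivRight fun t => ?_))
  simp only [card_mem_diag_eq]
  exact ⟨fun ⟨⟨h0, hpos, hrow, hcol⟩, hw⟩ =>
      ⟨fun i j hj => h0 (i, j) hj.not_gt, fun i j hj => hpos (i, j) hj, hrow, hcol, hw⟩,
    fun h => ⟨⟨fun c hc => h.eq_zero c.1 c.2 (not_lt.1 hc), fun c hc => h.pos c.1 c.2 hc,
      h.row_le, h.col_lt⟩, h.card_eq⟩⟩

theorem schurFn_weightOfList (ν : Nat.Partition N) (L : List ℕ) :
    schurFn ν (weightOfList L) = kostka L (rows ν) := by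
  rw [schurFn_eq_card_isTableau, card_isTableau L (antitone_rows ν)]

/-- The function `f`, giving the coefficients of the monomials with exponent vector `μ`, is that of
a symmetric function, homogeneous of degree `N`, in the variables `x_1, x_2, …`. -/
structure IsSymmetricOfDegree (N : ℕ) (f : (ℕ → ℕ) → ℚ) : Prop where
  exists_list : ∀ μ, f μ ≠ 0 → ∃ L : List ℕ, L.sum = N ∧ μ = weightOfList L
  perm : ∀ L L' : List ℕ, L.Perm L' → f (weightOfList L) = f (weightOfList L')

namespace IsSymmetricOfDegree

variable {f g : (ℕ → ℕ) → ℚ}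

theorem ext (hf : IsSymmetricOfDegree N f) (hg : IsSymmetricOfDegree N g)
    (h : ∀ ν : Nat.Partition N, f (weightOfList (partsDesc ν)) = g (weightOfList (partsDesc ν))) :
    f = g := by
  have heq (L : List ℕ) (hL : L.sum = N) : f (weightOfList L) = g (weightOfList L) := by
    obtain ⟨ν, k, hperm⟩ := exists_perm_partsDesc_append hL
    rw [hf.perm _ _ hperm, hg.perm _ _ hperm, weightOfList_append_replicate_zero, h]
  funext μ
  by_contra hne
  rcases not_and_or.1 fun h0 : f μ = 0 ∧ g μ = 0 => hne (h0.1.trans h0.2.symm) with h0 | h0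
  · obtain ⟨L, hL, rfl⟩ := hf.exists_list μ h0
    exact hne (heq L hL)
  · obtain ⟨L, hL, rfl⟩ := hg.exists_list μ h0
    exact hne (heq L hL)

theorem sum {ι : Type*} [Fintype ι] {f : ι → (ℕ → ℕ) → ℚ}
    (hf : ∀ i, IsSymmetricOfDegree N (f i)) (c : ι → ℚ) :
    IsSymmetricOfDegree N fun μ => ∑ i, c i * f i μ where
  exists_list μ hμ := by
    obtain ⟨i, _, hi⟩ := Finset.exists_ne_zero_of_sum_ne_zero hμ
    exact (hf i).exists_list μ (right_ne_zero_of_mul hi)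
  perm L L' h := Finset.sum_congr rfl fun i _ => by rw [(hf i).perm L L' h]

end IsSymmetricOfDegree

theorem isSymmetricOfDegree_schurFn (ν : Nat.Partition N) :
    IsSymmetricOfDegree N (schurFn ν) where
  exists_list μ hμ := by
    rw [schurFn_eq_card_isTableau, Nat.cast_ne_zero, Nat.card_ne_zero] at hμ
    obtain ⟨⟨t, ht⟩⟩ := hμ.1
    obtain ⟨L, hL, hw⟩ := exists_weightOfList_eq (α := cells (rows ν)) (g := fun c => t c)
      fun ⟨(i, j), hc⟩ => ht.pos i j (mem_cells.1 hc)
    refine ⟨L, by rw [hL, Nat.card_eq_fintype_card, Fintype.card_coe, card_cells, degree_rows],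
      funext fun k => ?_⟩
    rw [← ht.card_eq, ← hw, Nat.card_congr
      (Equiv.subtypeSubtypeEquivSubtypeInter (· ∈ cells (rows ν)) fun c => t c = k)]
    exact (Nat.subtype_card _ fun c => Finset.mem_filter).symm
  perm L L' h := by rw [schurFn_weightOfList, schurFn_weightOfList, kostka_perm h]

theorem IsSymmetricOfDegree.exists_schur_expansion {f : (ℕ → ℕ) → ℚ}
    (hf : IsSymmetricOfDegree N f) :
    ∃ c : Nat.Partition N →₀ ℚ, ∀ μ, f μ = c.sum fun ν a => a * schurFn ν μ := by
  obtain ⟨c, hc⟩ := kostkaMatrix_mulVec_surjective fun ν => f (weightOfList (partsDesc ν))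
  refine ⟨Finsupp.equivFunOnFinite.symm c, fun μ => ?_⟩
  rw [Finsupp.sum_fintype _ _ (by simp)]
  refine congrFun (hf.ext (.sum isSymmetricOfDegree_schurFn c) fun ν => ?_) μ
  rw [← congrFun hc ν, kostkaMatrix_mulVec_apply]
  simp only [schurFn_weightOfList]

end

/-! ### Colorings by weight -/

theorem isSymmetricOfDegree_XCoeff {V : Type*} [Fintype V] (G : SimpleGraph V) :
    IsSymmetricOfDegree (Fintype.card V) (XCoeff G) where
  exists_list μ hμ := by
    rw [XCoeff, Nat.cast_ne_zero, Nat.card_ne_zero] at hμ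
    obtain ⟨⟨f, hf, hw⟩⟩ := hμ.1
    obtain ⟨L, hL, hfL⟩ := exists_weightOfList_eq hf.1
    exact ⟨L, hL.trans Nat.card_eq_fintype_card, funext fun k => (hw k).symm.trans (hfL k)⟩
  perm L L' h := by
    obtain ⟨e, he, hw⟩ := exists_perm_weightOfList_eq h
    have hpos (k : ℕ) : 0 < e k ↔ 0 < k := by
      rw [Nat.pos_iff_ne_zero, Nat.pos_iff_ne_zero, ← e.injective.ne_iff (x := k), he]
    rw [XCoeff, XCoeff, Nat.cast_inj]
    refine Nat.card_congr (Equiv.subtypeEquiv (Equiv.arrowCongr (.refl V) e) fun f =>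
      and_congr (by simp [IsProperColoring, hpos]) (.trans ?_ (e.forall_congr_right
        (q := fun k => Nat.card {v // e (f v) = k} = weightOfList L' k))))
    simp [hw]

theorem exists_fin_add_one_eq {V : Type*} [Finite V] {f : V → ℕ} (hpos : ∀ v, 0 < f v) {m : ℕ}
    {w : Fin m → ℕ} (hw : ∀ k, Nat.card {v // f v = k} = weightOfList (List.ofFn w) k) (v : V) :
    ∃ i : Fin m, (i : ℕ) + 1 = f v := by
  obtain ⟨i, hi⟩ := Nat.exists_eq_add_of_lt (hpos v)
  suffices i < m from ⟨⟨i, this⟩, by simp [hi]⟩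
  by_contra! hle
  have : IsEmpty {u // f u = f v} := Finite.card_eq_zero_iff.1 ((hw _).trans
    (weightOfList_eq_zero (by rw [List.length_ofFn]; lia)))
  exact this.false ⟨v, rfl⟩

theorem XCoeff_weightOfList_ofFn {V : Type*} [Fintype V] (G : SimpleGraph V) {m : ℕ}
    (w : Fin m → ℕ) :
    XCoeff G (weightOfList (List.ofFn w)) =
      Nat.card {C : G.Coloring (Fin m) // ∀ k, Nat.card {v // C v = k} = w k} := by
  have hweight {C : V → Fin m} : (∀ k, Nat.card {v // (C v : ℕ) + 1 = k} =
      weightOfList (List.ofFn w) k) ↔ ∀ k, Nat.card {v // C v = k} = w k := by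
    refine ⟨fun h k => by simpa [weightOfList, Fin.val_inj] using h (k + 1), fun h => ?_⟩
    rintro (_ | k)
    · simp [weightOfList]
    · rcases lt_or_ge k m with hk | hk
      · simpa [weightOfList, hk, Fin.ext_iff] using h ⟨k, hk⟩
      · have : IsEmpty {v // (C v : ℕ) + 1 = k + 1} := ⟨fun v => by have := v.2; lia⟩
        rw [Nat.card_of_isEmpty, weightOfList_eq_zero (by rw [List.length_ofFn]; lia)]
  refine congrArg _ (Nat.card_congr (Equiv.ofBijective (fun C => ⟨fun v => (C.1 v : ℕ) + 1,
    ⟨fun v => Nat.succ_pos _, fun u v h => by simpa [Fin.val_inj] using C.1.valid h⟩,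
    hweight.2 C.2⟩) ⟨fun C C' h => ?_, ?_⟩).symm)
  · ext v
    simpa using congrFun (congrArg Subtype.val h) v
  · rintro ⟨f, hf, hw⟩
    choose C hC using exists_fin_add_one_eq hf.1 hw
    obtain rfl : (fun v => (C v : ℕ) + 1) = f := funext hC
    exact ⟨⟨.mk C fun h hc => hf.2 _ _ h (by simp [hc]), hweight.1 hw⟩, rfl⟩

theorem colorable_of_XCoeff_ne_zero {V : Type*} [Fintype V] {G : SimpleGraph V} {L : List ℕ}
    (h : XCoeff G (weightOfList L) ≠ 0) : G.Colorable L.length := by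
  rw [← List.ofFn_get L, XCoeff_weightOfList_ofFn, Nat.cast_ne_zero, Nat.card_ne_zero] at h
  exact h.1.map Subtype.val

/-! ### Colorings of the generalized net -/

section

variable {n : ℕ}

theorem adj_genNet_inl_inl {m : ℕ} {i j : Fin n} :
    (genNet n m).Adj (.inl i) (.inl j) ↔ i ≠ j := by
  simp [genNet]

theorem le_length_of_XCoeff_genNet_ne_zero {m : ℕ} {L : List ℕ}
    (h : XCoeff (genNet n m) (weightOfList L) ≠ 0) : n ≤ L.length := by
  simpa using (colorable_of_XCoeff_ne_zero h).card_le_of_pairwise_adj Sum.inl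
    fun i j hij => adj_genNet_inl_inl.2 hij

/-- The colors of the body in a coloring with `n` colors. -/
noncomputable def bodyPerm (C : (genNet n n).Coloring (Fin n)) : Equiv.Perm (Fin n) :=
  Equiv.ofBijective (fun i => C (.inl i)) (Finite.injective_iff_bijective.1
    (C.injective_comp_of_pairwise_adj Sum.inl fun _ _ h => adj_genNet_inl_inl.2 h))

theorem apply_bodyPerm_symm (C : (genNet n n).Coloring (Fin n)) (k : Fin n) :
    C (.inl ((bodyPerm C).symm k)) = k :=
  (bodyPerm C).apply_symm_apply k

theorem adj_genNet_inl_inr {m : ℕ} {i : Fin n} {j : Fin m} :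
    (genNet n m).Adj (.inl i) (.inr j) ↔ (i : ℕ) = j := by
  simp [genNet]

theorem not_adj_genNet_inr_inr {m : ℕ} {i j : Fin m} :
    ¬(genNet n m).Adj (.inr i) (.inr j) := by
  simp [genNet]

/-- The coloring of `GN_{n,n}` with color `σ i` on the anchor `i` and `q (σ i)` on its pendant. -/
def netColoring {q : Fin n → Fin n} (hq : ∀ k, q k ≠ k) (σ : Equiv.Perm (Fin n)) :
    (genNet n n).Coloring (Fin n) :=
  .mk (Sum.elim σ (q ∘ σ)) (by
    rintro (i | i) (j | j) h
    · exact σ.injective.ne (adj_genNet_inl_inl.1 h)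
    · obtain rfl := Fin.ext (adj_genNet_inl_inr.1 h)
      exact (hq _).symm
    · obtain rfl := Fin.ext (adj_genNet_inl_inr.1 h.symm)
      exact hq _
    · exact (not_adj_genNet_inr_inr h).elim)

theorem bodyPerm_netColoring {q : Fin n → Fin n} (hq : ∀ k, q k ≠ k) (σ : Equiv.Perm (Fin n)) :
    bodyPerm (netColoring hq σ) = σ :=
  Equiv.ext fun _ => rfl

/-- Every coloring of `GN_{n,n}` with `n` colors is a `netColoring`. -/
noncomputable def netColoringEquiv :
    {q : Fin n → Fin n // ∀ k, q k ≠ k} × Equiv.Perm (Fin n) ≃ (genNet n n).Coloring (Fin n) where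
  toFun x := netColoring x.1.2 x.2
  invFun C := (⟨fun k => C (.inr ((bodyPerm C).symm k)), fun k h =>
    C.valid (adj_genNet_inl_inr.2 rfl) ((apply_bodyPerm_symm C k).trans h.symm)⟩, bodyPerm C)
  left_inv := fun ⟨⟨q, hq⟩, σ⟩ => by
    simp only [bodyPerm_netColoring]
    exact Prod.ext (Subtype.ext (funext fun k => congrArg q (σ.apply_symm_apply k))) rfl
  right_inv C := by
    ext (i | i)
    · rfl
    · exact congrArg (fun k => (C (.inr k) : ℕ)) ((bodyPerm C).symm_apply_apply i)

theorem card_netColoring_eq {q : Fin n → Fin n} (hq : ∀ k, q k ≠ k) (σ : Equiv.Perm (Fin n))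
    (k : Fin n) :
    Nat.card {v // netColoring hq σ v = k} = Nat.card {i // q i = k} + 1 := by
  have hbody : Nat.card {i // σ i = k} = 1 := by
    rw [Nat.card_congr (σ.subtypeEquiv (q := (· = k)) fun _ => Iff.rfl)]
    simp
  have hpendants : Nat.card {i // q (σ i) = k} = Nat.card {i // q i = k} :=
    Nat.card_congr (σ.subtypeEquiv fun _ => Iff.rfl)
  rw [Nat.card_congr Equiv.subtypeSum, Nat.card_sum, add_comm]
  exact congrArg₂ _ hpendants hbody

theorem XCoeff_genNet_weightOfList_ofFn (w : Fin n → ℕ) :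
    XCoeff (genNet n n) (weightOfList (List.ofFn fun k => w k + 1)) =
      n.factorial * Nat.card {q : Fin n → Fin n //
        (∀ k, q k ≠ k) ∧ ∀ k, Nat.card {i // q i = k} = w k} := by
  have hweight (x : {q : Fin n → Fin n // ∀ k, q k ≠ k} × Equiv.Perm (Fin n)) :
      (∀ k, Nat.card {i // x.1.1 i = k} = w k) ↔
        ∀ k, Nat.card {v // netColoringEquiv x v = k} = w k + 1 :=
    forall_congr' fun k => by
      rw [netColoringEquiv, Equiv.coe_fn_mk, card_netColoring_eq, add_left_inj]
  rw [XCoeff_weightOfList_ofFn, ← Nat.card_congr (netColoringEquiv.subtypeEquiv hweight),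
    Nat.card_congr (Equiv.prodSubtypeFstEquivSubtypeProd
      (p := fun q : {q : Fin n → Fin n // ∀ k, q k ≠ k} => ∀ k, Nat.card {i // q.1 i = k} = w k)),
    Nat.card_prod, Nat.card_congr (Equiv.subtypeSubtypeEquivSubtypeInter _
      fun q : Fin n → Fin n => ∀ k, Nat.card {i // q i = k} = w k), Nat.card_perm, Nat.card_fin,
    Nat.cast_mul, mul_comm]

end

section

variable {m r : ℕ}

theorem card_filter_val_lt_and_ne (k : Fin (m + r)) :
    ({x : Fin (m + r) | (x : ℕ) < m ∧ x ≠ k} : Finset _).card =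
      if (k : ℕ) < m then m - 1 else m := by
  rw [← Finset.filter_filter, Finset.filter_ne', Finset.card_erase_eq_ite]
  simp [Fin.card_filter_val_lt]

theorem card_map_eq_append_iff {N : ℕ} {q : Fin (m + r) → Fin (m + r)} {a : Fin m → Fin N} :
    (∀ k, Nat.card {i // q i = k} = Fin.append (fun i => (a i : ℕ)) (fun _ : Fin r => 0) k) ↔
      (∀ i, (q i : ℕ) < m) ∧ ∀ k, Nat.card {i // q i = Fin.castAdd r k} = a k := by
  rw [Fin.forall_fin_add]
  simp only [Fin.append_left, Fin.append_right, Finite.card_eq_zero_iff]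
  rw [and_comm, and_congr_left_iff]
  refine fun _ => ⟨fun h i => ?_, fun h k => ⟨fun i => ?_⟩⟩
  · by_contra! hi
    exact (h ⟨q i - m, by lia⟩).false ⟨i, Fin.ext (by simp; lia)⟩
  · have := h i.1
    simp [i.2] at this

theorem sum_XCoeff_genNet :
    ∑ a : Fin m → Fin (m + r + 1), XCoeff (genNet (m + r) (m + r)) (weightOfList
        ((List.ofFn (fun i => (a i : ℕ)) ++ List.replicate r 0).map Nat.succ)) =
      (m + r).factorial * (((m : ℚ) - 1) ^ m * (m : ℚ) ^ r) := by
  let S (k : Fin (m + r)) : Finset (Fin (m + r)) := {x | (x : ℕ) < m ∧ x ≠ k}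
  let content (q : Fin (m + r) → Fin (m + r)) (k : Fin m) : Fin (m + r + 1) :=
    ⟨Nat.card {i // q i = Fin.castAdd r k},
      Nat.lt_succ_of_le ((Finite.card_subtype_le _).trans_eq (Nat.card_fin _))⟩
  have hX (a : Fin m → Fin (m + r + 1)) : XCoeff (genNet (m + r) (m + r)) (weightOfList
      ((List.ofFn (fun i => (a i : ℕ)) ++ List.replicate r 0).map Nat.succ)) =
        (m + r).factorial * ({q ∈ Fintype.piFinset S | content q = a} : Finset _).card := by
    rw [← List.ofFn_const, ← List.ofFn_fin_append, List.map_ofFn]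
    refine (XCoeff_genNet_weightOfList_ofFn _).trans ?_
    rw [Nat.subtype_card]
    intro q
    rw [card_map_eq_append_iff, Finset.mem_filter, Fintype.mem_piFinset, funext_iff]
    simp only [S, content, Finset.mem_filter_univ, Fin.ext_iff (b := a _), forall_and]
    rw [and_left_comm, and_assoc]
  have hS : (Fintype.piFinset S).card = (m - 1) ^ m * m ^ r := by
    simp [S, Fintype.card_piFinset, card_filter_val_lt_and_ne, Fin.prod_univ_add]
  simp only [hX]
  rw [← Finset.mul_sum, ← Nat.cast_sum, ← Finset.card_eq_sum_card_fiberwise fun _ _ => by simp, hS]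
  obtain _ | m := m <;> simp

end

/-! ### The coefficient of `s_{(2^n)}` -/

open Polynomial in
theorem sum_columnSign_eq_eval_neg_one {ι : Type*} {s : Finset ι} {c : ι → ℚ} {ρ : ι → ℕ →₀ ℕ}
    {n : ℕ} (hρ : ∀ i ∈ s, Antitone (ρ i)) (hd : ∀ i ∈ s, (ρ i).degree ≤ n) {q : ℚ[X]}
    (hq : q.natDegree ≤ n)
    (h : ∀ m ≤ n, ∑ i ∈ s, c i * numTableaux m (ρ i) = q.eval (m : ℚ)) :
    ∑ i ∈ s, c i * columnSign (ρ i) = q.eval (-1) := by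
  choose! p hdeg heval hneg using fun i hi => exists_polynomial_numTableaux (hρ i hi)
  have hpq : ∑ i ∈ s, C (c i) * p i = q := by
    refine eq_of_natDegree_lt_card_of_eval_eq (f := fun m : Fin (n + 1) => ((m : ℕ) : ℚ)) _ _
      (Nat.cast_injective.comp Fin.val_injective) (fun m => ?_) ?_
    · rw [← h m (Nat.lt_succ_iff.1 m.2), eval_finsetSum]
      exact Finset.sum_congr rfl fun i hi => by rw [eval_C_mul, heval i hi]
    · rw [Fintype.card_fin, Nat.lt_succ_iff]
      exact max_le (natDegree_sum_le_of_forall_le _ _ fun i hi =>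
        (natDegree_C_mul_le _ _).trans ((hdeg i hi).trans (hd i hi))) hq
  rw [← hpq, eval_finsetSum]
  exact Finset.sum_congr rfl fun i hi => by rw [eval_C_mul, hneg i hi]

/-- The partition `ρ` without its first column. -/
noncomputable def removeColumn (ρ : ℕ →₀ ℕ) : ℕ →₀ ℕ := ρ.mapRange (· - 1) rfl

theorem antitone_removeColumn {ρ : ℕ →₀ ℕ} (h : Antitone ρ) : Antitone (removeColumn ρ) :=
  fun _ _ hij => Nat.sub_le_sub_right (h hij) 1

theorem removeColumn_add_column {ρ : ℕ →₀ ℕ} {n : ℕ} (h : ∀ i, ρ i ≠ 0 ↔ i < n) :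
    removeColumn ρ + column n = ρ := by
  ext i
  have := h i
  simp only [removeColumn, Finsupp.add_apply, Finsupp.mapRange_apply, column_apply]
  split_ifs <;> lia

theorem degree_removeColumn_add {ρ : ℕ →₀ ℕ} {n : ℕ} (h : ∀ i, ρ i ≠ 0 ↔ i < n) :
    (removeColumn ρ).degree + n = ρ.degree := by
  conv_rhs => rw [← removeColumn_add_column h, map_add, degree_column]

theorem kostka_replicate_zero_append {ρ : ℕ →₀ ℕ} (h : Antitone ρ) (k : ℕ) (L : List ℕ) :
    kostka (List.replicate k 0 ++ L) ρ = kostka L ρ := by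
  induction k with
  | zero => rfl
  | succ k ih => rw [List.replicate_succ, List.cons_append, kostka_zero_cons h, ih]

theorem sum_kostka_map_succ {ρ : ℕ →₀ ℕ} (hρ : Antitone ρ) {m r B : ℕ}
    (h : ∀ i, ρ i ≠ 0 ↔ i < m + r) (hB : (removeColumn ρ).degree < B) :
    ∑ a : Fin m → Fin B,
        kostka ((List.ofFn (fun i => (a i : ℕ)) ++ List.replicate r 0).map Nat.succ) ρ =
      numTableaux m (removeColumn ρ) := by
  rw [← sum_kostka_ofFn m hB]
  refine Finset.sum_congr rfl fun a _ => ?_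
  have hlen : (List.ofFn (fun i => (a i : ℕ)) ++ List.replicate r 0).length = m + r := by simp
  conv_lhs => rw [← removeColumn_add_column h, ← hlen, kostka_map_succ_add_column]
  rw [kostka_perm List.perm_append_comm,
    kostka_replicate_zero_append (antitone_removeColumn hρ)]

theorem kostka_rows_eq_zero_of_length_lt {N : ℕ} {L : List ℕ} {ν : Nat.Partition N}
    (h : L.length < ν.parts.card) : kostka L (rows ν) = 0 := by
  by_contra hne
  exact rows_ne_zero_iff.2 h (eq_zero_of_length_le_of_kostka_ne_zero hne le_rfl)

theorem coeff_eq_zero_of_card_parts_lt {N n : ℕ} {c : Nat.Partition N → ℚ}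
    (hc : ∀ L : List ℕ, L.length < n → ∑ ν, c ν * (kostka L (rows ν) : ℚ) = 0)
    {ν : Nat.Partition N} (hν : ν.parts.card < n) : c ν = 0 := by
  refine eq_zero_of_kostkaMatrix_mulVec_eq_zero (P := fun ν => ν.parts.card < n)
    (fun μ ν h hμ => ?_) (fun μ hμ => ?_) hν
  · have := not_lt.1 (mt kostka_rows_eq_zero_of_length_lt h)
    exact this.trans_lt (by rwa [length_partsDesc])
  · rw [kostkaMatrix_mulVec_apply, hc _ (by rwa [length_partsDesc])]

theorem rows_ne_zero_iff_of_card {N n : ℕ} {ν : Nat.Partition N} (h : ν.parts.card = n) (i : ℕ) :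
    rows ν i ≠ 0 ↔ i < n := by
  rw [rows_ne_zero_iff, h]

theorem sum_mul_numTableaux_removeColumn {N m r B : ℕ} {c : Nat.Partition N → ℚ}
    (hc : ∀ ν : Nat.Partition N, ν.parts.card < m + r → c ν = 0) (hB : N < B + (m + r)) :
    ∑ ν with ν.parts.card = m + r, c ν * numTableaux m (removeColumn (rows ν)) =
      ∑ a : Fin m → Fin B, ∑ ν, c ν * (kostka
        ((List.ofFn (fun i => (a i : ℕ)) ++ List.replicate r 0).map Nat.succ) (rows ν) : ℚ) := by
  rw [Finset.sum_comm]
  refine Finset.sum_subset_zero_on_sdiff (Finset.subset_univ _) (fun ν hν => ?_) fun ν hν => ?_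
  · rcases lt_or_gt_of_ne (by simpa using hν : ν.parts.card ≠ m + r) with h | h
    · simp [hc ν h]
    · exact Finset.sum_eq_zero fun a _ => by
        rw [kostka_rows_eq_zero_of_length_lt (by simpa using h), Nat.cast_zero, mul_zero]
  · have hrows := rows_ne_zero_iff_of_card (Finset.mem_filter.1 hν).2
    have hdeg := degree_removeColumn_add hrows
    rw [degree_rows] at hdeg
    rw [← Finset.mul_sum, ← sum_kostka_map_succ (B := B) (antitone_rows ν) hrows (by lia),
      Nat.cast_sum]

theorem sum_mul_numTableaux_eq_eval {N n m : ℕ} {c : Nat.Partition N → ℚ} (hN : N ≤ 2 * n)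
    (hc : ∀ L, XCoeff (genNet n n) (weightOfList L) = ∑ ν, c ν * (kostka L (rows ν) : ℚ))
    (hm : m ≤ n) :
    ∑ ν with ν.parts.card = n, c ν * numTableaux m (removeColumn (rows ν)) =
      (.C (n.factorial : ℚ) * netPolynomial n : Polynomial ℚ).eval (m : ℚ) := by
  have hzero (ν : Nat.Partition N) : ν.parts.card < n → c ν = 0 :=
    coeff_eq_zero_of_card_parts_lt fun L hL => by
      rw [← hc]
      exact not_not.1 (mt le_length_of_XCoeff_genNet_ne_zero hL.not_ge)
  rw [Polynomial.eval_C_mul, eval_natCast_netPolynomial hm]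
  obtain ⟨r, rfl⟩ := Nat.exists_eq_add_of_le hm
  rw [sum_mul_numTableaux_removeColumn (B := m + r + 1) hzero (by lia),
    Nat.add_sub_cancel_left, ← sum_XCoeff_genNet]
  exact Finset.sum_congr rfl fun a _ => (hc _).symm

theorem sum_mul_columnSign_eq {N n : ℕ} {c : Nat.Partition N → ℚ} (hN : N ≤ 2 * n)
    (hc : ∀ L, XCoeff (genNet n n) (weightOfList L) = ∑ ν, c ν * (kostka L (rows ν) : ℚ)) :
    ∑ ν with ν.parts.card = n, c ν * columnSign (removeColumn (rows ν)) =
      n.factorial * if Even n then 1 else 0 := by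
  have hdegree (ν : Nat.Partition N) (hν : ν.parts.card = n) :
      (removeColumn (rows ν)).degree ≤ n := by
    have := degree_removeColumn_add (rows_ne_zero_iff_of_card hν)
    rw [degree_rows] at this
    lia
  rw [sum_columnSign_eq_eval_neg_one (fun ν _ => antitone_removeColumn (antitone_rows ν))
      (fun ν hν => hdegree ν (Finset.mem_filter.1 hν).2)
      ((Polynomial.natDegree_C_mul_le _ _).trans (natDegree_netPolynomial_le n))
      fun m hm => sum_mul_numTableaux_eq_eval hN hc hm,
    Polynomial.eval_C_mul, eval_neg_one_netPolynomial]

theorem removeColumn_rows_twoOne_zero (n : ℕ) : removeColumn (rows (twoOne n 0)) = column n := by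
  have hparts : (twoOne n 0).parts = Multiset.replicate n 2 := by simp [twoOne]
  have hdesc : partsDesc (twoOne n 0) = List.replicate n 2 := by
    rw [← Multiset.coe_eq_coe.trans List.perm_replicate, coe_partsDesc, hparts,
      Multiset.coe_replicate]
  ext i
  rw [removeColumn, Finsupp.mapRange_apply, rows, hdesc, column_apply]
  split_ifs with h <;> simp [h]

theorem sum_mul_columnSign_removeColumn {n : ℕ} (c : Nat.Partition (2 * n + 0) → ℚ) :
    ∑ ν with ν.parts.card = n, c ν * columnSign (removeColumn (rows ν)) =
      c (twoOne n 0) * (-1) ^ n := by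
  have hcard : (twoOne n 0).parts.card = n := by simp [twoOne]
  have hsum := removeColumn_add_column (rows_ne_zero_iff_of_card hcard)
  rw [removeColumn_rows_twoOne_zero] at hsum
  rw [Finset.sum_eq_single_of_mem (twoOne n 0) (by simp [hcard]) fun ν hν hne => ?_,
    removeColumn_rows_twoOne_zero, columnSign_column]
  have hrows := rows_ne_zero_iff_of_card (Finset.mem_filter.1 hν).2
  rw [columnSign_eq_zero fun j hj => hne (rows_injective ?_), mul_zero]
  have hdegree := degree_removeColumn_add hrows
  rw [degree_rows, hj, degree_column] at hdegree
  obtain rfl : j = n := by lia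
  rw [← hsum, ← removeColumn_add_column hrows, hj]

theorem coeff_twoOne_zero {n : ℕ} {c : Nat.Partition (2 * n + 0) → ℚ}
    (hc : ∀ L, XCoeff (genNet n n) (weightOfList L) = ∑ ν, c ν * (kostka L (rows ν) : ℚ)) :
    c (twoOne n 0) = if Even n then (n.factorial : ℚ) else 0 := by
  have h := (sum_mul_columnSign_removeColumn c).symm.trans (sum_mul_columnSign_eq (by lia) hc)
  split_ifs at h ⊢ with hn
  · simpa [hn.neg_one_pow] using h
  · simpa using h

/-- For `n ≥ 1`, the Schur coefficient `[s_{(2^n)}] X_{GN_{n,n}}`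
equals `n!` if `n` is even and `0` if `n` is odd. -/
theorem schurCoeff_genNet_two_pow (n : ℕ) (hn : 1 ≤ n) :
    sCoeff (XCoeff (genNet n n)) (twoOne n 0) =
      if Even n then (n.factorial : ℚ) else 0 := by
  have hcard : Fintype.card (Fin n ⊕ Fin n) = 2 * n + 0 := by simp [two_mul]
  have h : ∃ c : Nat.Partition (2 * n + 0) →₀ ℚ,
      ∀ μ, XCoeff (genNet n n) μ = c.sum fun ν a => a * schurFn ν μ :=
    (hcard ▸ isSymmetricOfDegree_XCoeff (genNet n n)).exists_schur_expansion
  rw [sCoeff, dif_pos h]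
  refine coeff_twoOne_zero fun L => ?_
  rw [h.choose_spec, Finsupp.sum_fintype _ _ (by simp)]
  simp only [schurFn_weightOfList]
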